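/- arXiv:1512.01160 — 2 statements merged into one kernel-verified Lean document; each statement's English description precedes it below -/
import Mathlib

section
/- Let 0 < α ≤ 1 and consider the torus T²_α = (0, 2π/α) × (0, 2π). Let V : ℝ² → ℝ be continuous, nonnegative, periodic with period 2π/α in x_1 and period 2π in x_2. Suppose φ_1, …, φ_N : ℝ² → ℝ are smooth, periodic with the same periods, orthonormal in L²(T²_α), and for each n there is λ_n > 0 such that −Δφ_n − P(V · (Pφ_n)) = −λ_n φ_n on ℝ². Then ∑_{n=1}^N λ_n ≤ (π/24) ∫_{T²_α} V(x)² dx. -/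
open Real MeasureTheory

/-- Second partial derivative with respect to the first variable. -/
noncomputable def pd11 (f : ℝ × ℝ → ℝ) (x : ℝ × ℝ) : ℝ :=
  deriv (fun s => deriv (fun t => f (t, x.2)) s) x.1

/-- Second partial derivative with respect to the second variable. -/
noncomputable def pd22 (f : ℝ × ℝ → ℝ) (x : ℝ × ℝ) : ℝ :=
  deriv (fun s => deriv (fun t => f (x.1, t)) s) x.2

/-- The projection removing the average with respect to the second (shortest) coordinate:
`(Pψ)(x₁, x₂) = ψ(x₁, x₂) − (1/(2π)) ∫_0^{2π} ψ(x₁, t) dt`. -/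
noncomputable def projP (ψ : ℝ × ℝ → ℝ) (x : ℝ × ℝ) : ℝ :=
  ψ x - (1 / (2 * π)) * ∫ t in (0:ℝ)..(2 * π), ψ (x.1, t)

/-!
The kinetic energy of an orthonormal family is bounded below by splitting each function at
frequency `R` and integrating the squared norms of the high-frequency parts over `R`. The density
`ρ = ∑ φₙ²` of the whole family exceeds that of the high-frequency parts by an amount controlled,
pointwise, by the number of lattice points `(α p₁, p₂)` with `p₂ ≠ 0` in the disc of radius `R`.
Comparing the row lengths with the area of the disc by the trapezoid rule for the concave function
`√(R² - x²)` bounds this number by `(π³ / 9) R² / α`, and `(6 / π) ∫ ρ² ≤ ∑ ‖∇φₙ‖²` follows.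

The modes `p₂ = 0` of an eigenfunction satisfy `(λ + (α p₁)²) c = 0`, hence vanish. Therefore
`P φₙ = φₙ` and `‖∇φₙ‖² = ∫ V φₙ² - λₙ`, and the theorem follows from
`V ρ ≤ (6 / π) ρ² + (π / 24) V²`.
-/

open scoped ComplexConjugate

section L2Basis

variable {X Y ι κ : Type*} [MeasurableSpace X] [MeasurableSpace Y] {μ : Measure X} {ν : Measure Y}

lemma inner_toLp_toLp {f g : X → ℂ} (hf : MemLp f 2 μ) (hg : MemLp g 2 μ) :
    inner ℂ (hf.toLp f) (hg.toLp g) = ∫ x, conj (f x) * g x ∂μ := by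
  rw [L2.inner_def]
  refine integral_congr_ae ?_
  filter_upwards [hf.coeFn_toLp, hg.coeFn_toLp] with x hfx hgx
  rw [hfx, hgx, RCLike.inner_apply, mul_comm]

lemma norm_toLp_sq {f : X → ℂ} (hf : MemLp f 2 μ) : ‖hf.toLp f‖ ^ 2 = ∫ x, ‖f x‖ ^ 2 ∂μ := by
  rw [← inner_self_eq_norm_sq (𝕜 := ℂ), inner_toLp_toLp]
  simp only [Complex.conj_mul', ← Complex.ofReal_pow, integral_complex_ofReal,
    RCLike.re_to_complex, Complex.ofReal_re]

lemma orthonormal_toLp_ofReal [DecidableEq ι] {φ : ι → X → ℝ}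
    (hφ : ∀ n, MemLp (fun x => (φ n x : ℂ)) 2 μ)
    (h_orth : ∀ n m, ∫ x, φ n x * φ m x ∂μ = if n = m then 1 else 0) :
    Orthonormal ℂ fun n => (hφ n).toLp fun x => (φ n x : ℂ) := by
  rw [orthonormal_iff_ite]
  intro n m
  rw [inner_toLp_toLp]
  simp only [Complex.conj_ofReal, ← Complex.ofReal_mul, integral_complex_ofReal, h_orth]
  split_ifs <;> simp

lemma integrable_conj_mul {f g : X → ℂ} (hf : MemLp f 2 μ) (hg : MemLp g 2 μ) :
    Integrable (fun x => conj (f x) * g x) μ :=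
  hf.star.integrable_mul hg

lemma memLp_two_mul_prod [SFinite μ] [SFinite ν] {f : X → ℂ} {g : Y → ℂ} (hf : MemLp f 2 μ)
    (hg : MemLp g 2 ν) : MemLp (fun z : X × Y => f z.1 * g z.2) 2 (μ.prod ν) := by
  refine (memLp_two_iff_integrable_sq_norm (hf.1.comp_fst.mul hg.1.comp_snd)).2 ?_
  simp only [Pi.mul_apply, norm_mul, mul_pow]
  exact ((memLp_two_iff_integrable_sq_norm hf.1).1 hf).mul_prod
    ((memLp_two_iff_integrable_sq_norm hg.1).1 hg)

lemma memLp_two_integral_conj_mul [SFinite μ] [SFinite ν] {e : Y → ℂ} (he : MemLp e 2 ν)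
    {f : X × Y → ℂ} (hf : MemLp f 2 (μ.prod ν)) :
    MemLp (fun x => ∫ y, conj (e y) * f (x, y) ∂ν) 2 μ := by
  have hf_sq : Integrable (fun z => ‖f z‖ ^ 2) (μ.prod ν) :=
    (memLp_two_iff_integrable_sq_norm hf.1).1 hf
  have h_meas : AEStronglyMeasurable (fun x => ∫ y, conj (e y) * f (x, y) ∂ν) μ :=
    ((Complex.continuous_conj.comp_aestronglyMeasurable
      he.1.comp_snd).mul hf.1).integral_prod_right'
  rw [memLp_two_iff_integrable_sq_norm h_meas]
  refine (hf_sq.integral_prod_left.const_mul (‖he.toLp e‖ ^ 2)).mono' (h_meas.norm.pow 2) ?_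
  filter_upwards [hf_sq.prod_right_ae, hf.1.prodMk_left] with x hx hx_meas
  have hfx : MemLp (fun y => f (x, y)) 2 ν := (memLp_two_iff_integrable_sq_norm hx_meas).2 hx
  rw [norm_pow, norm_norm, ← norm_toLp_sq hfx, ← mul_pow, ← inner_toLp_toLp he hfx]
  gcongr
  exact norm_inner_le_norm _ _

/-- The coefficient `⟨e i, f⟩` of `f` with respect to a family `e` of functions in `L²(μ; ℂ)`. -/
noncomputable def l2Coeff (μ : Measure X) (e : ι → X → ℂ) (f : X → ℂ) (i : ι) : ℂ :=
  ∫ x, conj (e i x) * f x ∂μ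

/-- The family `e` is an orthonormal basis of `L²(μ; ℂ)`. Its members are functions rather than
classes of functions, so that they can be multiplied and evaluated at points. -/
structure IsL2Basis (μ : Measure X) (e : ι → X → ℂ) : Prop where
  memLp : ∀ i, MemLp (e i) 2 μ
  orthonormal : Orthonormal ℂ fun i => (memLp i).toLp (e i)
  ae_eq_zero : ∀ f : X → ℂ, MemLp f 2 μ → (∀ i, l2Coeff μ e f i = 0) → f =ᵐ[μ] 0

namespace IsL2Basis

variable {e : ι → X → ℂ} {e' : κ → Y → ℂ}

lemma ae_eq_zero_of_prod [SFinite μ] [SFinite ν] [Countable κ] (he : IsL2Basis μ e)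
    (he' : IsL2Basis ν e') {f : X × Y → ℂ} (hf : MemLp f 2 (μ.prod ν))
    (hzero : ∀ i k, ∫ z, conj (e i z.1 * e' k z.2) * f z ∂μ.prod ν = 0) :
    f =ᵐ[μ.prod ν] 0 := by
  have h_fibre_coeff (k : κ) : (fun x => l2Coeff ν e' (fun y => f (x, y)) k) =ᵐ[μ] 0 := by
    refine he.ae_eq_zero _ (memLp_two_integral_conj_mul (he'.memLp k) hf) fun i => ?_
    have h_int : Integrable (fun z => conj (e i z.1 * e' k z.2) * f z) (μ.prod ν) :=
      integrable_conj_mul (memLp_two_mul_prod (he.memLp i) (he'.memLp k)) hf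
    rw [← hzero i k, integral_prod _ h_int]
    simp only [l2Coeff, map_mul, mul_assoc, integral_const_mul]
  have hf_sq : Integrable (fun z => ‖f z‖ ^ 2) (μ.prod ν) :=
    (memLp_two_iff_integrable_sq_norm hf.1).1 hf
  have h_fibre : ∀ᵐ x ∂μ, ∫ y, ‖f (x, y)‖ ^ 2 ∂ν = 0 := by
    filter_upwards [ae_all_iff.2 h_fibre_coeff, hf_sq.prod_right_ae, hf.1.prodMk_left]
      with x hx hx_int hx_meas
    refine integral_eq_zero_of_ae ?_
    filter_upwards [he'.ae_eq_zero _ ((memLp_two_iff_integrable_sq_norm hx_meas).2 hx_int) hx]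
      with y hy
    simpa using hy
  have h_sq : (fun z => ‖f z‖ ^ 2) =ᵐ[μ.prod ν] 0 := by
    rw [← integral_eq_zero_iff_of_nonneg (fun z => sq_nonneg _) hf_sq, integral_prod _ hf_sq]
    exact integral_eq_zero_of_ae h_fibre
  filter_upwards [h_sq] with z hz
  simpa using hz

lemma prod [SFinite μ] [SFinite ν] [Countable κ] (he : IsL2Basis μ e) (he' : IsL2Basis ν e') :
    IsL2Basis (μ.prod ν) fun (p : ι × κ) z => e p.1 z.1 * e' p.2 z.2 where
  memLp p := memLp_two_mul_prod (he.memLp p.1) (he'.memLp p.2)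
  orthonormal := by
    classical
    have h_mul (p q : ι × κ) (z : X × Y) : conj (e p.1 z.1 * e' p.2 z.2) * (e q.1 z.1 * e' q.2 z.2)
        = conj (e p.1 z.1) * e q.1 z.1 * (conj (e' p.2 z.2) * e' q.2 z.2) := by
      rw [map_mul]; ring
    have h_fst := orthonormal_iff_ite.1 he.orthonormal
    have h_snd := orthonormal_iff_ite.1 he'.orthonormal
    simp only [inner_toLp_toLp] at h_fst h_snd
    rw [orthonormal_iff_ite]
    rintro p q
    rw [inner_toLp_toLp]
    simp only [h_mul]
    rw [integral_prod_mul (fun x => conj (e p.1 x) * e q.1 x) fun y => conj (e' p.2 y) * e' q.2 y,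
      h_fst, h_snd, ite_zero_mul_ite_zero, mul_one]
    simp only [Prod.ext_iff]
  ae_eq_zero f hf hzero := he.ae_eq_zero_of_prod he' hf fun i k => hzero (i, k)

/-- The orthonormal basis `e` as a Hilbert basis of the space `Lp ℂ 2 μ`. -/
noncomputable def hilbertBasis (he : IsL2Basis μ e) : HilbertBasis ι ℂ (Lp ℂ 2 μ) :=
  HilbertBasis.mkOfOrthogonalEqBot he.orthonormal <| by
    rw [Submodule.eq_bot_iff]
    intro g hg
    rw [Lp.eq_zero_iff_ae_eq_zero]
    refine he.ae_eq_zero g (Lp.memLp g) fun i => ?_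
    have h_inner := (Submodule.mem_orthogonal _ _).1 hg _ (Submodule.subset_span ⟨i, rfl⟩)
    rwa [← Lp.toLp_coeFn g (Lp.memLp g), inner_toLp_toLp] at h_inner

lemma hilbertBasis_apply (he : IsL2Basis μ e) (i : ι) :
    he.hilbertBasis i = (he.memLp i).toLp (e i) :=
  congrFun (HilbertBasis.coe_mkOfOrthogonalEqBot he.orthonormal _) i

lemma inner_hilbertBasis_toLp (he : IsL2Basis μ e) {f : X → ℂ} (hf : MemLp f 2 μ) (i : ι) :
    inner ℂ (he.hilbertBasis i) (hf.toLp f) = l2Coeff μ e f i := by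
  rw [hilbertBasis_apply, inner_toLp_toLp, l2Coeff]

lemma hasSum_conj_l2Coeff_mul (he : IsL2Basis μ e) {f g : X → ℂ} (hf : MemLp f 2 μ)
    (hg : MemLp g 2 μ) :
    HasSum (fun i => conj (l2Coeff μ e f i) * l2Coeff μ e g i) (∫ x, conj (f x) * g x ∂μ) := by
  rw [← inner_toLp_toLp hf hg]
  simpa only [← inner_conj_symm (hf.toLp f), he.inner_hilbertBasis_toLp] using
    he.hilbertBasis.hasSum_inner_mul_inner (hf.toLp f) (hg.toLp g)

end IsL2Basis

end L2Basis

section Kinetic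

lemma sum_norm_sum_inner_mul_sq_le {E ι κ : Type*} [NormedAddCommGroup E] [InnerProductSpace ℂ E]
    [Fintype ι] {v : κ → E} {w : ι → E} (hv : Orthonormal ℂ v) (hw : Orthonormal ℂ w)
    (S : Finset κ) (a : κ → ℂ) :
    ∑ n, ‖∑ p ∈ S, inner ℂ (v p) (w n) * a p‖ ^ 2 ≤ ∑ p ∈ S, ‖a p‖ ^ 2 := by
  have h_inner (n : ι) : ‖∑ p ∈ S, inner ℂ (v p) (w n) * a p‖ =
      ‖inner ℂ (w n) (∑ p ∈ S, conj (a p) • v p)‖ := by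
    rw [norm_inner_symm, sum_inner]
    simp only [inner_smul_left, Complex.conj_conj, mul_comm]
  have h_norm : ‖∑ p ∈ S, conj (a p) • v p‖ ^ 2 = ∑ p ∈ S, ‖a p‖ ^ 2 := by
    rw [← inner_self_eq_norm_sq (𝕜 := ℂ), hv.inner_sum]
    simp only [Complex.conj_conj, Complex.mul_conj', ← Complex.ofReal_pow, ← Complex.ofReal_sum,
      RCLike.re_to_complex, Complex.ofReal_re]
  simp only [h_inner, ← h_norm]
  exact hw.sum_inner_products_le _

lemma sq_max_sqrt_sum_sub_le {ι : Type*} [Fintype ι] (u v : ι → ℂ) {b : ℝ} (hb : 0 ≤ b)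
    (hv : ∑ n, ‖v n‖ ^ 2 ≤ b ^ 2) :
    max 0 (√(∑ n, ‖u n‖ ^ 2) - b) ^ 2 ≤ ∑ n, ‖u n - v n‖ ^ 2 := by
  have h_triangle : √(∑ n, ‖u n‖ ^ 2) ≤ √(∑ n, ‖u n - v n‖ ^ 2) + √(∑ n, ‖v n‖ ^ 2) := by
    simpa [EuclideanSpace.norm_eq] using
      norm_add_le (WithLp.toLp 2 (u - v) : EuclideanSpace ℂ ι) (WithLp.toLp 2 v)
  have hv_sqrt : √(∑ n, ‖v n‖ ^ 2) ≤ b := (Real.sqrt_le_left hb).2 hv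
  rw [← Real.sq_sqrt (show 0 ≤ ∑ n, ‖u n - v n‖ ^ 2 by positivity)]
  gcongr
  exact max_le (Real.sqrt_nonneg _) (by linarith)

lemma lintegral_two_mul_ite_sq_lt (s : ℝ) (c : ENNReal) :
    ∫⁻ R in Set.Ioi 0, ENNReal.ofReal (2 * R) * (if R ^ 2 < s then c else 0) =
      ENNReal.ofReal s * c := by
  have h_indicator : ∀ R ∈ Set.Ioi (0 : ℝ), ENNReal.ofReal (2 * R) * (if R ^ 2 < s then c else 0) =
      (Set.Iio √s).indicator (fun R => ENNReal.ofReal (2 * R) * c) R := fun R hR => by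
    simp only [Set.indicator, Set.mem_Iio, Real.lt_sqrt (le_of_lt hR), mul_ite, mul_zero]
  have h_weight : ∫⁻ R in Set.Ioc 0 √s, ENNReal.ofReal (2 * R) = ENNReal.ofReal s := by
    rw [← ofReal_integral_eq_lintegral_ofReal
        ((by fun_prop : Continuous fun R : ℝ => 2 * R).integrableOn_Ioc)
        ((ae_restrict_mem measurableSet_Ioc).mono fun R hR => mul_nonneg zero_le_two hR.1.le),
      ← intervalIntegral.integral_of_le (Real.sqrt_nonneg s), intervalIntegral.integral_const_mul,
      integral_id, mul_div_cancel₀ _ two_ne_zero, zero_pow two_ne_zero, sub_zero]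
    rcases le_total 0 s with hs | hs
    · rw [Real.sq_sqrt hs]
    · rw [Real.sqrt_eq_zero_of_nonpos hs, ENNReal.ofReal_of_nonpos hs]
      simp
  rw [setLIntegral_congr_fun measurableSet_Ioi h_indicator, lintegral_indicator measurableSet_Iio,
    Measure.restrict_restrict measurableSet_Iio, lintegral_mul_const _ (by fun_prop),
    Set.inter_comm, Set.Ioi_inter_Iio, Measure.restrict_congr_set Ioo_ae_eq_Ioc, h_weight]

lemma integral_two_mul_sub_mul_sq (r : ℝ) {b : ℝ} (hb : b ≠ 0) :
    ∫ R in (0 : ℝ)..r / b, 2 * R * (r - b * R) ^ 2 = r ^ 4 / (6 * b ^ 2) := by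
  have h_deriv (R : ℝ) : HasDerivAt
      (fun R : ℝ => r ^ 2 * R ^ 2 - 4 / 3 * r * b * R ^ 3 + b ^ 2 / 2 * R ^ 4)
      (2 * R * (r - b * R) ^ 2) R := by
    refine ((((hasDerivAt_pow 2 R).const_mul (r ^ 2)).sub
      ((hasDerivAt_pow 3 R).const_mul (4 / 3 * r * b))).add
      ((hasDerivAt_pow 4 R).const_mul (b ^ 2 / 2))).congr_deriv ?_
    push_cast
    ring
  rw [intervalIntegral.integral_eq_sub_of_hasDerivAt (fun R _ => h_deriv R)
    (Continuous.intervalIntegrable (by fun_prop) _ _)]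
  field_simp
  ring

lemma ofReal_pow_four_div_le_lintegral {r b : ℝ} (hr : 0 ≤ r) (hb : 0 < b) :
    ENNReal.ofReal (r ^ 4 / (6 * b ^ 2)) ≤
      ∫⁻ R in Set.Ioi 0, ENNReal.ofReal (2 * R) * ENNReal.ofReal (max 0 (r - b * R) ^ 2) := by
  calc ENNReal.ofReal (r ^ 4 / (6 * b ^ 2))
      = ∫⁻ R in Set.Ioc 0 (r / b), ENNReal.ofReal (2 * R * (r - b * R) ^ 2) := by
        rw [← integral_two_mul_sub_mul_sq r hb.ne',
          intervalIntegral.integral_of_le (by positivity), ofReal_integral_eq_lintegral_ofReal]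
        · exact (by fun_prop : Continuous fun R : ℝ => 2 * R * (r - b * R) ^ 2).integrableOn_Ioc
        · filter_upwards [ae_restrict_mem measurableSet_Ioc] with R hR
          exact mul_nonneg (mul_nonneg zero_le_two hR.1.le) (sq_nonneg _)
    _ = ∫⁻ R in Set.Ioc 0 (r / b),
          ENNReal.ofReal (2 * R) * ENNReal.ofReal (max 0 (r - b * R) ^ 2) := by
        refine setLIntegral_congr_fun measurableSet_Ioc fun R hR => ?_
        have hR_le : b * R ≤ r := by
          simpa only [mul_comm] using (le_div_iff₀ hb).1 hR.2
        rw [max_eq_right (sub_nonneg.2 hR_le),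
          ← ENNReal.ofReal_mul (mul_nonneg zero_le_two hR.1.le)]
    _ ≤ _ := lintegral_mono_set Set.Ioc_subset_Ioi_self

variable {X ι κ : Type*} [MeasurableSpace X] {μ : Measure X} {e : κ → X → ℂ}

lemma lintegral_two_mul_sum_tsum_ite_sq_lt [Fintype ι] [Countable κ] (E : κ → ℝ)
    (a : ι → κ → ENNReal) :
    ∫⁻ R in Set.Ioi 0, ENNReal.ofReal (2 * R) * ∑ n, ∑' p, (if R ^ 2 < E p then a n p else 0) =
      ∑ n, ∑' p, ENNReal.ofReal (E p) * a n p := by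
  have h_meas (n : ι) (p : κ) : Measurable fun R : ℝ =>
      ENNReal.ofReal (2 * R) * (if R ^ 2 < E p then a n p else 0) :=
    (by fun_prop : Measurable fun R : ℝ => ENNReal.ofReal (2 * R)).mul <|
      Measurable.ite (measurableSet_lt (by fun_prop) measurable_const) measurable_const
        measurable_const
  simp only [Finset.mul_sum, ← ENNReal.tsum_mul_left]
  rw [lintegral_finsetSum _ fun n _ => Measurable.tsum (h_meas n)]
  refine Finset.sum_congr rfl fun n _ => ?_
  rw [lintegral_tsum fun p => (h_meas n p).aemeasurable]
  simp only [lintegral_two_mul_ite_sq_lt]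

lemma lintegral_sq_div_le_lintegral_two_mul [SFinite μ] {ρ : X → ℝ} (hρ : AEMeasurable ρ μ)
    (hρ_nonneg : ∀ x, 0 ≤ ρ x) {K : ℝ} (hK : 0 < K) :
    ∫⁻ x, ENNReal.ofReal (ρ x ^ 2 / (6 * K)) ∂μ ≤
      ∫⁻ R in Set.Ioi 0, ENNReal.ofReal (2 * R) *
        ∫⁻ x, ENNReal.ofReal (max 0 (√(ρ x) - √K * R) ^ 2) ∂μ := by
  simp only [← lintegral_const_mul' _ _ ENNReal.ofReal_ne_top]
  rw [lintegral_lintegral_swap]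
  · refine lintegral_mono fun x => ?_
    convert ofReal_pow_four_div_le_lintegral (Real.sqrt_nonneg (ρ x)) (Real.sqrt_pos.2 hK) using 3
    · rw [show 4 = 2 * 2 from rfl, pow_mul, Real.sq_sqrt (hρ_nonneg x)]
    · rw [Real.sq_sqrt hK.le]
  · have : AEMeasurable (fun z : ℝ × X => ρ z.2)
        ((volume.restrict (Set.Ioi 0)).prod μ) := hρ.comp_snd
    unfold Function.uncurry
    fun_prop

namespace IsL2Basis

lemma hasSum_norm_l2Coeff_sq (he : IsL2Basis μ e) {f : X → ℂ} (hf : MemLp f 2 μ) :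
    HasSum (fun p => ‖l2Coeff μ e f p‖ ^ 2) (∫ x, ‖f x‖ ^ 2 ∂μ) := by
  have h := he.hasSum_conj_l2Coeff_mul hf hf
  simp only [Complex.conj_mul', ← Complex.ofReal_pow, integral_complex_ofReal] at h
  exact Complex.hasSum_ofReal.1 h

lemma lintegral_norm_sq_eq_tsum (he : IsL2Basis μ e) {f : X → ℂ} (hf : MemLp f 2 μ) :
    ∫⁻ x, ENNReal.ofReal (‖f x‖ ^ 2) ∂μ = ∑' p, ENNReal.ofReal (‖l2Coeff μ e f p‖ ^ 2) := by
  have h := he.hasSum_norm_l2Coeff_sq hf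
  rw [← ENNReal.ofReal_tsum_of_nonneg (fun p => sq_nonneg _) h.summable, h.tsum_eq,
    ofReal_integral_eq_lintegral_ofReal ((memLp_two_iff_integrable_sq_norm hf.1).1 hf)
      (.of_forall fun x => sq_nonneg _)]

lemma memLp_sub_sum (he : IsL2Basis μ e) {f : X → ℂ} (hf : MemLp f 2 μ) (S : Finset κ)
    (a : κ → ℂ) : MemLp (fun x => f x - ∑ p ∈ S, a p * e p x) 2 μ :=
  hf.sub (memLp_finsetSum S fun p _ => (he.memLp p).const_mul (a p))

lemma l2Coeff_sub_sum [DecidableEq κ] (he : IsL2Basis μ e) {f : X → ℂ} (hf : MemLp f 2 μ)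
    (S : Finset κ) (q : κ) :
    l2Coeff μ e (fun x => f x - ∑ p ∈ S, l2Coeff μ e f p * e p x) q =
      if q ∈ S then 0 else l2Coeff μ e f q := by
  have h_orth := orthonormal_iff_ite.1 he.orthonormal
  simp only [inner_toLp_toLp] at h_orth
  have h_int (p : κ) : Integrable (fun x => l2Coeff μ e f p * (conj (e q x) * e p x)) μ :=
    (integrable_conj_mul (he.memLp q) (he.memLp p)).const_mul _
  have h_expand (x : X) : conj (e q x) * (f x - ∑ p ∈ S, l2Coeff μ e f p * e p x) =
      conj (e q x) * f x - ∑ p ∈ S, l2Coeff μ e f p * (conj (e q x) * e p x) := by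
    rw [mul_sub, Finset.mul_sum]
    simp only [mul_left_comm]
  rw [l2Coeff]
  simp only [h_expand]
  rw [integral_sub (integrable_conj_mul (he.memLp q) hf)
      (integrable_finsetSum _ fun p _ => h_int p), integral_finsetSum _ fun p _ => h_int p]
  simp only [integral_const_mul, h_orth, mul_ite, mul_one, mul_zero, Finset.sum_ite_eq]
  split_ifs
  · exact sub_self _
  · exact sub_zero _

variable [Fintype ι] {f : ι → X → ℂ}

lemma sum_norm_sum_l2Coeff_mul_sq_le (he : IsL2Basis μ e) (hf : ∀ n, MemLp (f n) 2 μ)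
    (hf_on : Orthonormal ℂ fun n => (hf n).toLp (f n)) (S : Finset κ) (x : X) :
    ∑ n, ‖∑ p ∈ S, l2Coeff μ e (f n) p * e p x‖ ^ 2 ≤ ∑ p ∈ S, ‖e p x‖ ^ 2 := by
  simpa only [l2Coeff, inner_toLp_toLp] using
    sum_norm_sum_inner_mul_sq_le he.orthonormal hf_on S fun p => e p x

lemma lintegral_sq_max_sqrt_sum_sub_le [DecidableEq κ] (he : IsL2Basis μ e)
    (hf : ∀ n, MemLp (f n) 2 μ) (hf_on : Orthonormal ℂ fun n => (hf n).toLp (f n))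
    {S : Finset κ} {b : ℝ} (hb : 0 ≤ b) (hS : ∀ x, ∑ p ∈ S, ‖e p x‖ ^ 2 ≤ b ^ 2) :
    ∫⁻ x, ENNReal.ofReal (max 0 (√(∑ n, ‖f n x‖ ^ 2) - b) ^ 2) ∂μ ≤
      ∑ n, ∑' p, if p ∈ S then 0 else ENNReal.ofReal (‖l2Coeff μ e (f n) p‖ ^ 2) := by
  let tail (n : ι) (x : X) : ℂ := f n x - ∑ p ∈ S, l2Coeff μ e (f n) p * e p x
  have h_tail_memLp (n : ι) : MemLp (tail n) 2 μ := he.memLp_sub_sum (hf n) S _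
  calc ∫⁻ x, ENNReal.ofReal (max 0 (√(∑ n, ‖f n x‖ ^ 2) - b) ^ 2) ∂μ
      ≤ ∫⁻ x, ∑ n, ENNReal.ofReal (‖tail n x‖ ^ 2) ∂μ := by
        refine lintegral_mono fun x => ?_
        rw [← ENNReal.ofReal_sum_of_nonneg fun n _ => sq_nonneg _]
        exact ENNReal.ofReal_le_ofReal <| sq_max_sqrt_sum_sub_le _ _ hb <|
          (he.sum_norm_sum_l2Coeff_mul_sq_le hf hf_on S x).trans (hS x)
    _ = ∑ n, ∫⁻ x, ENNReal.ofReal (‖tail n x‖ ^ 2) ∂μ :=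
        lintegral_finsetSum' _ fun n _ =>
          ((h_tail_memLp n).1.norm.aemeasurable.pow_const 2).ennreal_ofReal
    _ = ∑ n, ∑' p, if p ∈ S then 0 else ENNReal.ofReal (‖l2Coeff μ e (f n) p‖ ^ 2) := by
        refine Finset.sum_congr rfl fun n _ => ?_
        rw [he.lintegral_norm_sq_eq_tsum (h_tail_memLp n)]
        refine tsum_congr fun p => ?_
        rw [he.l2Coeff_sub_sum (hf n)]
        split_ifs <;> simp

lemma lintegral_sq_max_sqrt_sum_sub_le_of_le (he : IsL2Basis μ e) (hf : ∀ n, MemLp (f n) 2 μ)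
    (hf_on : Orthonormal ℂ fun n => (hf n).toLp (f n)) {E : κ → ℝ} {S : Finset κ} {b t : ℝ}
    (hb : 0 ≤ b) (hS : ∀ x, ∑ p ∈ S, ‖e p x‖ ^ 2 ≤ b ^ 2)
    (hS_low : ∀ p ∉ S, E p ≤ t → ∀ n, l2Coeff μ e (f n) p = 0) :
    ∫⁻ x, ENNReal.ofReal (max 0 (√(∑ n, ‖f n x‖ ^ 2) - b) ^ 2) ∂μ ≤
      ∑ n, ∑' p, if t < E p then ENNReal.ofReal (‖l2Coeff μ e (f n) p‖ ^ 2) else 0 := by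
  classical
  refine (he.lintegral_sq_max_sqrt_sum_sub_le hf hf_on hb hS).trans
    (Finset.sum_le_sum fun n _ => ENNReal.tsum_le_tsum fun p => ?_)
  by_cases hpS : p ∈ S
  · simp only [hpS, if_true, zero_le]
  rcases le_or_gt (E p) t with hp | hp
  · simp [hS_low p hpS hp n]
  · simp only [hpS, hp, if_true, if_false, le_refl]

lemma lintegral_sq_sum_norm_sq_le [SFinite μ] [Countable κ] (he : IsL2Basis μ e)
    (hf : ∀ n, MemLp (f n) 2 μ) (hf_on : Orthonormal ℂ fun n => (hf n).toLp (f n))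
    {E : κ → ℝ} {K : ℝ} (hK : 0 < K)
    (hE : ∀ R > 0, ∃ S : Finset κ, (∀ x, ∑ p ∈ S, ‖e p x‖ ^ 2 ≤ K * R ^ 2) ∧
      ∀ p ∉ S, E p ≤ R ^ 2 → ∀ n, l2Coeff μ e (f n) p = 0) :
    ∫⁻ x, ENNReal.ofReal ((∑ n, ‖f n x‖ ^ 2) ^ 2 / (6 * K)) ∂μ ≤
      ∑ n, ∑' p, ENNReal.ofReal (E p) * ENNReal.ofReal (‖l2Coeff μ e (f n) p‖ ^ 2) := by
  have h_meas : AEMeasurable (fun x => ∑ n, ‖f n x‖ ^ 2) μ :=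
    Finset.aemeasurable_fun_sum _ fun n _ => (hf n).1.norm.aemeasurable.pow_const 2
  rw [← lintegral_two_mul_sum_tsum_ite_sq_lt]
  refine (lintegral_sq_div_le_lintegral_two_mul h_meas
    (fun x => Finset.sum_nonneg fun n _ => sq_nonneg _) hK).trans
    (setLIntegral_mono' measurableSet_Ioi fun R (hR : 0 < R) => ?_)
  obtain ⟨S, hS, hS_low⟩ := hE R hR
  gcongr
  refine he.lintegral_sq_max_sqrt_sum_sub_le_of_le hf hf_on (S := S) (by positivity) ?_ hS_low
  simpa only [mul_pow, Real.sq_sqrt hK.le] using hS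

end IsL2Basis

end Kinetic

section LatticeCount

lemma trapezoid_le_integral_of_concaveOn {f : ℝ → ℝ} {a b : ℝ} (hab : a ≤ b)
    (hf : ConcaveOn ℝ (Set.Icc a b) f) (hf_int : IntervalIntegrable f volume a b) :
    (b - a) * (f a + f b) / 2 ≤ ∫ x in a..b, f x := by
  rcases hab.eq_or_lt with rfl | hlt
  · simp
  have h_chord : ∀ x ∈ Set.Icc a b, (b - x) * f a + (x - a) * f b ≤ (b - a) * f x := by
    intro x hx
    have hb : 0 < b - a := sub_pos.2 hlt
    have h := hf.2 (Set.left_mem_Icc.2 hab) (Set.right_mem_Icc.2 hab)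
      (div_nonneg (sub_nonneg.2 hx.2) hb.le) (div_nonneg (sub_nonneg.2 hx.1) hb.le)
      (by field_simp; ring)
    have h_point : (b - x) / (b - a) * a + (x - a) / (b - a) * b = x := by field_simp; ring
    rw [smul_eq_mul, smul_eq_mul, smul_eq_mul, smul_eq_mul, h_point] at h
    calc (b - x) * f a + (x - a) * f b
        = (b - a) * ((b - x) / (b - a) * f a + (x - a) / (b - a) * f b) := by field_simp
      _ ≤ (b - a) * f x := by gcongr
  have h_int := intervalIntegral.integral_mono_on hab
    (Continuous.intervalIntegrable (by fun_prop) a b) (hf_int.const_mul (b - a)) h_chord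
  have h_lhs : ∫ x in a..b, ((b - x) * f a + (x - a) * f b) =
      (b - a) * ((b - a) * (f a + f b) / 2) := by
    rw [intervalIntegral.integral_add (Continuous.intervalIntegrable (by fun_prop) a b)
      (Continuous.intervalIntegrable (by fun_prop) a b), intervalIntegral.integral_mul_const,
      intervalIntegral.integral_mul_const, intervalIntegral.integral_sub (by simp) (by simp),
      intervalIntegral.integral_sub (by simp) (by simp)]
    simp only [intervalIntegral.integral_const, integral_id, smul_eq_mul]
    ring
  rw [h_lhs, intervalIntegral.integral_const_mul] at h_int
  exact le_of_mul_le_mul_left h_int (sub_pos.2 hlt)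

lemma sum_Icc_le_integral_of_concaveOn {f : ℝ → ℝ} {m : ℕ} (hf : ConcaveOn ℝ (Set.Icc 0 (m : ℝ)) f)
    (hf_cont : Continuous f) :
    ∑ k ∈ Finset.Icc 1 m, f k ≤ (∫ x in (0 : ℝ)..m, f x) + (f m - f 0) / 2 := by
  induction m with
  | zero => simp
  | succ m ih =>
    have h_init := ih (hf.subset (Set.Icc_subset_Icc_right (by simp)) (convex_Icc _ _))
    have h_last := trapezoid_le_integral_of_concaveOn (by simp)
      (hf.subset (Set.Icc_subset_Icc_left (Nat.cast_nonneg m)) (convex_Icc _ _))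
      (hf_cont.intervalIntegrable _ _)
    rw [Finset.sum_Icc_succ_top (by lia), ← intervalIntegral.integral_add_adjacent_intervals
      (hf_cont.intervalIntegrable 0 m) (hf_cont.intervalIntegrable m _)]
    push_cast at h_last ⊢
    linarith

lemma integral_sqrt_sq_sub_sq {R : ℝ} (hR : 0 < R) :
    ∫ x in (0 : ℝ)..R, √(R ^ 2 - x ^ 2) = π * R ^ 2 / 4 := by
  have h_cont : Continuous fun x : ℝ => √(1 - x ^ 2) := by fun_prop
  have h_unit : ∫ x in (0 : ℝ)..1, √(1 - x ^ 2) = π / 4 := by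
    have h_half := intervalIntegral.integral_comp_neg (a := 0) (b := 1) fun x : ℝ => √(1 - x ^ 2)
    have h_split := intervalIntegral.integral_add_adjacent_intervals
      (μ := volume) (h_cont.intervalIntegrable (-1) 0) (h_cont.intervalIntegrable 0 1)
    rw [integral_sqrt_one_sub_sq] at h_split
    simp only [neg_zero, neg_sq] at h_half
    linarith
  have h_scale (x : ℝ) : √(R ^ 2 - (x * R) ^ 2) = R * √(1 - x ^ 2) := by
    rw [show R ^ 2 - (x * R) ^ 2 = R ^ 2 * (1 - x ^ 2) by ring, Real.sqrt_mul (sq_nonneg R),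
      Real.sqrt_sq hR.le]
  have h_subst := intervalIntegral.integral_comp_mul_right (a := 0) (b := 1)
    (fun x : ℝ => √(R ^ 2 - x ^ 2)) hR.ne'
  simp only [h_scale, intervalIntegral.integral_const_mul, h_unit, zero_mul, one_mul,
    smul_eq_mul] at h_subst
  field_simp at h_subst
  linarith

lemma concaveOn_sqrt_sq_sub_sq (R : ℝ) :
    ConcaveOn ℝ (Set.Icc 0 R) fun x => √(R ^ 2 - x ^ 2) := by
  have h_sq : ConcaveOn ℝ (Set.Icc 0 R) fun x : ℝ => R ^ 2 - x ^ 2 :=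
    (concaveOn_const _ (convex_Icc 0 R)).sub
      ((convexOn_pow 2).subset Set.Icc_subset_Ici_self (convex_Icc 0 R))
  refine ⟨convex_Icc 0 R, fun x hx y hy a b ha hb hab => ?_⟩
  have h_nonneg : ∀ z ∈ Set.Icc 0 R, R ^ 2 - z ^ 2 ∈ Set.Ici 0 := fun z hz =>
    sub_nonneg.2 (pow_le_pow_left₀ hz.1 hz.2 2)
  exact (Real.strictConcaveOn_sqrt.concaveOn.2 (h_nonneg x hx) (h_nonneg y hy) ha hb hab).trans
    (Real.sqrt_le_sqrt (h_sq.2 hx hy ha hb hab))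

lemma four_mul_sum_sqrt_sq_sub_sq_le {R : ℝ} (hR : 0 < R) {m : ℕ} (hm : m ≤ R) :
    4 * ∑ k ∈ Finset.Icc 1 m, √(R ^ 2 - (k : ℝ) ^ 2) ≤
      π * R ^ 2 - 2 * R + 2 * (1 - (R - m)) * √(R ^ 2 - (m : ℝ) ^ 2) := by
  have h_cont : Continuous fun x : ℝ => √(R ^ 2 - x ^ 2) := by fun_prop
  have h_concave := concaveOn_sqrt_sq_sub_sq R
  have h_sum := sum_Icc_le_integral_of_concaveOn
    (h_concave.subset (Set.Icc_subset_Icc_right hm) (convex_Icc _ _)) h_cont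
  have h_last := trapezoid_le_integral_of_concaveOn hm
    (h_concave.subset (Set.Icc_subset_Icc_left (Nat.cast_nonneg m)) (convex_Icc _ _))
    (h_cont.intervalIntegrable _ _)
  have h_split := intervalIntegral.integral_add_adjacent_intervals
    (μ := volume) (h_cont.intervalIntegrable 0 m) (h_cont.intervalIntegrable m R)
  rw [integral_sqrt_sq_sub_sq hR] at h_split
  simp only [zero_pow two_ne_zero, sub_zero, Real.sqrt_sq hR.le, sub_self, Real.sqrt_zero,
    add_zero] at h_sum h_last
  linarith

lemma pi_add_le_pi_pow_three_div_nine : π + 3 / 10 ≤ π ^ 3 / 9 := by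
  nlinarith [pi_gt_d4, mul_pos pi_pos pi_pos]

lemma four_mul_sqrt_sq_sub_one_add_two_le {R : ℝ} (hR : 1 ≤ R) :
    4 * √(R ^ 2 - 1) + 2 ≤ π ^ 3 / 9 * R ^ 2 := by
  have h_sq := Real.sq_sqrt (show 0 ≤ R ^ 2 - 1 by nlinarith)
  have h_pi : 10 / 3 ≤ π ^ 3 / 9 := by linarith [pi_add_le_pi_pow_three_div_nine, pi_gt_d4]
  calc 4 * √(R ^ 2 - 1) + 2 ≤ 10 / 3 * R ^ 2 := by
        nlinarith [sq_nonneg (√(R ^ 2 - 1) - 3 / 5)]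
    _ ≤ π ^ 3 / 9 * R ^ 2 := by gcongr

lemma two_mul_one_sub_mul_sqrt_sub_le {R δ : ℝ} (hR : 2 ≤ R) (hδ : 0 ≤ δ) (hδ_le : δ ≤ 1) :
    2 * (1 - δ) * √(R ^ 2 - (R - δ) ^ 2) - 2 * δ ≤ 3 / 10 * R ^ 2 := by
  have h_sq := Real.sq_sqrt (show 0 ≤ R ^ 2 - (R - δ) ^ 2 by nlinarith)
  calc 2 * (1 - δ) * √(R ^ 2 - (R - δ) ^ 2) - 2 * δ
      ≤ (1 - δ) * (1 + (R ^ 2 - (R - δ) ^ 2)) - 2 * δ := by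
        nlinarith [mul_nonneg (sub_nonneg.2 hδ_le) (sq_nonneg (√(R ^ 2 - (R - δ) ^ 2) - 1))]
    _ ≤ 1 + (2 * R - 3) * δ - 2 * R * δ ^ 2 := by
        nlinarith [mul_nonneg (sq_nonneg δ) (sub_nonneg.2 hδ_le)]
    _ ≤ 3 / 10 * R ^ 2 := by
        nlinarith [sq_nonneg (2 * δ - 1), mul_nonneg (sub_nonneg.2 hR) hδ]

lemma sum_four_mul_sqrt_sq_sub_sq_add_two_le {R : ℝ} (hR : 0 < R) :
    ∑ k ∈ Finset.Icc 1 ⌊R⌋₊, (4 * √(R ^ 2 - (k : ℝ) ^ 2) + 2) ≤ π ^ 3 / 9 * R ^ 2 := by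
  have h_floor : (⌊R⌋₊ : ℝ) ≤ R := Nat.floor_le hR.le
  obtain hm | hm | hm : ⌊R⌋₊ = 0 ∨ ⌊R⌋₊ = 1 ∨ 2 ≤ ⌊R⌋₊ := by lia
  · rw [hm, Finset.Icc_eq_empty (by lia), Finset.sum_empty]
    positivity
  · rw [hm, Nat.cast_one] at h_floor
    simpa [hm] using four_mul_sqrt_sq_sub_one_add_two_le h_floor
  · have h_two_le : (2 : ℝ) ≤ R := le_trans (by exact_mod_cast hm) h_floor
    have h_sum := four_mul_sum_sqrt_sq_sub_sq_le hR h_floor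
    have h_rem := two_mul_one_sub_mul_sqrt_sub_le h_two_le (sub_nonneg.2 h_floor)
      (sub_le_iff_le_add'.2 (Nat.lt_floor_add_one R).le)
    rw [sub_sub_cancel] at h_rem
    rw [Finset.sum_add_distrib, ← Finset.mul_sum, Finset.sum_const, Nat.card_Icc,
      add_tsub_cancel_right, nsmul_eq_mul]
    calc 4 * ∑ k ∈ Finset.Icc 1 ⌊R⌋₊, √(R ^ 2 - (k : ℝ) ^ 2) + ⌊R⌋₊ * 2
        ≤ (π + 3 / 10) * R ^ 2 := by linarith
      _ ≤ π ^ 3 / 9 * R ^ 2 := by gcongr; exact pi_add_le_pi_pow_three_div_nine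

/-- For `k ≤ R`, the frequencies `p ∈ ℤ²` with `|p.2| = k` and `(α p.1)² + p.2² ≤ R²`. -/
noncomputable def freqRow (α R : ℝ) (k : ℕ) : Finset (ℤ × ℤ) :=
  Finset.Icc (-⌊√(R ^ 2 - (k : ℝ) ^ 2) / α⌋) ⌊√(R ^ 2 - (k : ℝ) ^ 2) / α⌋ ×ˢ {(k : ℤ), -(k : ℤ)}

/-- The frequencies `p ∈ ℤ²` with `p.2 ≠ 0` and `(α p.1)² + p.2² ≤ R²`. -/
noncomputable def lowFreq (α R : ℝ) : Finset (ℤ × ℤ) :=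
  (Finset.Icc 1 ⌊R⌋₊).biUnion (freqRow α R)

variable {α R : ℝ}

lemma mem_lowFreq (hα : 0 < α) (hR : 0 < R) {p : ℤ × ℤ} (hp : p.2 ≠ 0)
    (h_le : (α * p.1) ^ 2 + (p.2 : ℝ) ^ 2 ≤ R ^ 2) : p ∈ lowFreq α R := by
  have h_natAbs : (p.2.natAbs : ℝ) = |(p.2 : ℝ)| := by rw [Nat.cast_natAbs, Int.cast_abs]
  have h_fst : |(p.1 : ℝ)| ≤ √(R ^ 2 - (p.2.natAbs : ℝ) ^ 2) / α := by
    rw [le_div_iff₀ hα, ← abs_of_pos hα, ← abs_mul, mul_comm, h_natAbs, sq_abs]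
    exact Real.abs_le_sqrt (by linarith)
  have h_snd : (p.2.natAbs : ℝ) ≤ R := by
    rw [h_natAbs]
    exact abs_le_of_sq_le_sq (by nlinarith [sq_nonneg (α * p.1)]) hR.le
  simp only [lowFreq, freqRow, Finset.mem_biUnion, Finset.mem_product, Finset.mem_Icc,
    Finset.mem_insert, Finset.mem_singleton]
  refine ⟨p.2.natAbs, ⟨Int.natAbs_pos.2 hp, Nat.le_floor h_snd⟩, ⟨?_, ?_⟩, by lia⟩
  · rw [neg_le, Int.le_floor, Int.cast_neg]
    exact (neg_le_abs _).trans h_fst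
  · exact Int.le_floor.2 ((le_abs_self _).trans h_fst)

lemma card_freqRow_le (hα : 0 < α) (k : ℕ) :
    ((freqRow α R k).card : ℝ) ≤ (2 * (√(R ^ 2 - (k : ℝ) ^ 2) / α) + 1) * 2 := by
  rw [freqRow, Finset.card_product, Nat.cast_mul]
  have h_nonneg : 0 ≤ √(R ^ 2 - (k : ℝ) ^ 2) / α := by positivity
  gcongr
  · have h_card : (0 : ℤ) ≤ ⌊√(R ^ 2 - (k : ℝ) ^ 2) / α⌋ + 1 - -⌊√(R ^ 2 - (k : ℝ) ^ 2) / α⌋ := by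
      linarith [Int.floor_nonneg.2 h_nonneg]
    rw [Int.card_Icc, ← Int.cast_natCast, Int.toNat_of_nonneg h_card]
    push_cast
    linarith [Int.floor_le (√(R ^ 2 - (k : ℝ) ^ 2) / α)]
  · exact_mod_cast Finset.card_le_two

lemma mul_card_lowFreq_le (hα : 0 < α) (hα_le : α ≤ 1) (hR : 0 < R) :
    α * (lowFreq α R).card ≤ π ^ 3 / 9 * R ^ 2 := by
  calc α * (lowFreq α R).card
      ≤ α * ∑ k ∈ Finset.Icc 1 ⌊R⌋₊, ((freqRow α R k).card : ℝ) := by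
        gcongr
        exact_mod_cast Finset.card_biUnion_le
    _ ≤ α * ∑ k ∈ Finset.Icc 1 ⌊R⌋₊, (2 * (√(R ^ 2 - (k : ℝ) ^ 2) / α) + 1) * 2 := by
        gcongr with k
        exact card_freqRow_le hα k
    _ = ∑ k ∈ Finset.Icc 1 ⌊R⌋₊, (4 * √(R ^ 2 - (k : ℝ) ^ 2) + 2 * α) := by
        rw [Finset.mul_sum]
        refine Finset.sum_congr rfl fun k _ => ?_
        field_simp
        ring
    _ ≤ ∑ k ∈ Finset.Icc 1 ⌊R⌋₊, (4 * √(R ^ 2 - (k : ℝ) ^ 2) + 2) := by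
        gcongr
        linarith
    _ ≤ π ^ 3 / 9 * R ^ 2 := sum_four_mul_sqrt_sq_sub_sq_add_two_le hR

end LatticeCount

section BoundedSet

variable {X E : Type*} [MetricSpace X] [ProperSpace X] [MeasurableSpace X]
  [OpensMeasurableSpace X] {μ : Measure X} [IsFiniteMeasureOnCompacts μ] [NormedAddCommGroup E]
  {s : Set X}

lemma integrableOn_of_continuous_of_isBounded {f : X → E} (hf : Continuous f)
    (hs : Bornology.IsBounded s) : IntegrableOn f s μ :=
  (hf.continuousOn.integrableOn_compact hs.isCompact_closure).mono_set subset_closure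

lemma memLp_two_of_continuous_of_isBounded {f : X → E} (hf : Continuous f)
    (hs : Bornology.IsBounded s) : MemLp f 2 (μ.restrict s) := by
  have h_meas : AEStronglyMeasurable f (μ.restrict s) :=
    (integrableOn_of_continuous_of_isBounded hf hs).aestronglyMeasurable
  rw [memLp_two_iff_integrable_sq_norm h_meas]
  exact integrableOn_of_continuous_of_isBounded (hf.norm.pow 2) hs

end BoundedSet

section FourierBasis

/-- The Fourier mode `x ↦ exp (2πikx / T) / √T` on an interval of length `T`, normalized in `L²`. -/
noncomputable def intervalChar (T : ℝ) (k : ℤ) (x : ℝ) : ℂ :=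
  fourier k (x : AddCircle T) / √T

variable {T : ℝ} {k : ℤ}

@[fun_prop]
lemma continuous_intervalChar : Continuous (intervalChar T k) :=
  ((fourier k).continuous.comp (AddCircle.continuous_mk' T)).div_const _

lemma norm_intervalChar_sq (hT : 0 < T) (k : ℤ) (x : ℝ) : ‖intervalChar T k x‖ ^ 2 = T⁻¹ := by
  rw [intervalChar, norm_div, fourier_apply, Circle.norm_coe, Complex.norm_real, div_pow,
    Real.norm_eq_abs, sq_abs, Real.sq_sqrt hT.le, one_pow, one_div]

lemma intervalChar_zero (T x : ℝ) : intervalChar T 0 x = (√T : ℂ)⁻¹ := by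
  rw [intervalChar, fourier_zero, one_div]

lemma intervalChar_period (T : ℝ) (k : ℤ) : intervalChar T k T = intervalChar T k 0 := by
  simp only [intervalChar, AddCircle.coe_period, QuotientAddGroup.mk_zero]

lemma conj_intervalChar (T : ℝ) (k : ℤ) (x : ℝ) :
    conj (intervalChar T k x) = intervalChar T (-k) x := by
  rw [intervalChar, intervalChar, map_div₀, Complex.conj_ofReal, fourier_neg]

lemma hasDerivAt_intervalChar (T : ℝ) (k : ℤ) (x : ℝ) :
    HasDerivAt (intervalChar T k) (2 * π * Complex.I * k / T * intervalChar T k x) x :=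
  ((hasDerivAt_fourier T k x).div_const (√T : ℂ)).congr_deriv (mul_div_assoc _ _ _)

lemma integral_conj_intervalChar_mul_intervalChar (hT : 0 < T) (k l : ℤ) :
    ∫ x in (0 : ℝ)..T, conj (intervalChar T k x) * intervalChar T l x = if k = l then 1 else 0 := by
  have : Fact (0 < T) := ⟨hT⟩
  have h_sqrt : (√T : ℂ) * √T = T := by exact_mod_cast Real.mul_self_sqrt hT.le
  have h_mul (x : ℝ) : conj (intervalChar T k x) * intervalChar T l x
      = (1 / T : ℝ) • (fourier (-k) (x : AddCircle T) • fourier l (x : AddCircle T)) := by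
    rw [conj_intervalChar, intervalChar, intervalChar, div_mul_div_comm, h_sqrt, Complex.real_smul,
      smul_eq_mul, Complex.ofReal_div, Complex.ofReal_one, one_div_mul_eq_div]
  have h_coeff := fourierCoeff_eq_intervalIntegral (T := T) (fourier l) k 0
  rw [fourierCoeff_fourier, zero_add] at h_coeff
  simp only [h_mul]
  rw [intervalIntegral.integral_smul, ← h_coeff, Pi.single_apply]

lemma integral_conj_intervalChar (hT : 0 < T) (hk : k ≠ 0) :
    ∫ x in (0 : ℝ)..T, conj (intervalChar T k x) = 0 := by
  have h_orth := integral_conj_intervalChar_mul_intervalChar hT k 0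
  have h_sqrt : (√T : ℂ)⁻¹ ≠ 0 :=
    inv_ne_zero (Complex.ofReal_ne_zero.2 (Real.sqrt_pos.2 hT).ne')
  simp only [intervalChar_zero, intervalIntegral.integral_mul_const, if_neg hk] at h_orth
  exact (mul_eq_zero.1 h_orth).resolve_right h_sqrt

lemma fourierCoeffOn_eq_integral_conj_intervalChar (hT : 0 < T) (f : ℝ → ℂ) (k : ℤ) :
    fourierCoeffOn hT f k
      = (√T : ℂ)⁻¹ * ∫ x in (0 : ℝ)..T, conj (intervalChar T k x) * f x := by
  have h_sqrt : (√T : ℂ) * √T = T := by exact_mod_cast Real.mul_self_sqrt hT.le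
  rw [fourierCoeffOn_eq_integral, ← intervalIntegral.integral_const_mul,
    ← intervalIntegral.integral_smul]
  refine intervalIntegral.integral_congr fun x _ => ?_
  rw [conj_intervalChar, intervalChar]
  simp only [fourier_coe_apply, sub_zero, Complex.real_smul, smul_eq_mul, Complex.ofReal_div,
    Complex.ofReal_one, ← h_sqrt]
  ring

lemma isL2Basis_intervalChar (hT : 0 < T) :
    IsL2Basis (volume.restrict (Set.Ioc 0 T)) (intervalChar T) where
  memLp k := memLp_two_of_continuous_of_isBounded continuous_intervalChar (Metric.isBounded_Ioc 0 T)
  orthonormal := by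
    rw [orthonormal_iff_ite]
    intro k l
    rw [inner_toLp_toLp, ← intervalIntegral.integral_of_le hT.le]
    exact integral_conj_intervalChar_mul_intervalChar hT k l
  ae_eq_zero f hf hzero := by
    have h_coeff (k : ℤ) : fourierCoeffOn hT f k = 0 := by
      rw [fourierCoeffOn_eq_integral_conj_intervalChar, intervalIntegral.integral_of_le hT.le]
      exact mul_eq_zero_of_right _ (hzero k)
    have h_sum_zero : HasSum (fun k => ‖fourierCoeffOn hT f k‖ ^ 2) 0 := by
      simp [h_coeff]
    have h_parseval := (hasSum_sq_fourierCoeffOn hT hf).unique h_sum_zero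
    rw [sub_zero, smul_eq_mul, mul_eq_zero, or_iff_right (inv_ne_zero hT.ne'),
      intervalIntegral.integral_of_le hT.le, integral_eq_zero_iff_of_nonneg
      (fun x => sq_nonneg _) ((memLp_two_iff_integrable_sq_norm hf.1).1 hf)] at h_parseval
    filter_upwards [h_parseval] with x hx
    simpa using hx

/-- Lebesgue measure on the rectangle `(0, T₁] × (0, T₂]`, a fundamental domain of the torus with
periods `T₁` and `T₂`. -/
noncomputable abbrev rectMeasure (T₁ T₂ : ℝ) : Measure (ℝ × ℝ) :=
  volume.restrict (Set.Ioc 0 T₁ ×ˢ Set.Ioc 0 T₂)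

/-- The Fourier modes of the torus with periods `T₁` and `T₂`, normalized in `L²`. -/
noncomputable def rectChar (T₁ T₂ : ℝ) (p : ℤ × ℤ) (x : ℝ × ℝ) : ℂ :=
  intervalChar T₁ p.1 x.1 * intervalChar T₂ p.2 x.2

/-- The Fourier coefficients of a function on the torus with periods `T₁` and `T₂`, with respect to
the normalized modes `rectChar`. -/
noncomputable abbrev rectCoeff (T₁ T₂ : ℝ) (f : ℝ × ℝ → ℂ) (p : ℤ × ℤ) : ℂ :=
  l2Coeff (rectMeasure T₁ T₂) (rectChar T₁ T₂) f p

variable {T₁ T₂ : ℝ}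

@[fun_prop]
lemma continuous_rectChar {p : ℤ × ℤ} : Continuous (rectChar T₁ T₂ p) := by
  unfold rectChar
  fun_prop

lemma norm_rectChar_sq (hT₁ : 0 < T₁) (hT₂ : 0 < T₂) (p : ℤ × ℤ) (x : ℝ × ℝ) :
    ‖rectChar T₁ T₂ p x‖ ^ 2 = (T₁ * T₂)⁻¹ := by
  rw [rectChar, norm_mul, mul_pow, norm_intervalChar_sq hT₁, norm_intervalChar_sq hT₂, mul_inv]

lemma isL2Basis_rectChar (hT₁ : 0 < T₁) (hT₂ : 0 < T₂) :
    IsL2Basis (rectMeasure T₁ T₂) (rectChar T₁ T₂) := by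
  rw [rectMeasure, Measure.volume_eq_prod, ← Measure.prod_restrict]
  exact (isL2Basis_intervalChar hT₁).prod (isL2Basis_intervalChar hT₂)

end FourierBasis

section Rectangle

variable {T₁ T₂ : ℝ} {E : Type*} [NormedAddCommGroup E] {f : ℝ × ℝ → E}

lemma integrable_rectMeasure (hf : Continuous f) : Integrable f (rectMeasure T₁ T₂) :=
  integrableOn_of_continuous_of_isBounded hf
    ((Metric.isBounded_Ioc 0 T₁).prod (Metric.isBounded_Ioc 0 T₂))

lemma memLp_two_rectMeasure (hf : Continuous f) : MemLp f 2 (rectMeasure T₁ T₂) :=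
  memLp_two_of_continuous_of_isBounded hf
    ((Metric.isBounded_Ioc 0 T₁).prod (Metric.isBounded_Ioc 0 T₂))

variable [NormedSpace ℝ E]

lemma integral_rectMeasure (hT₁ : 0 ≤ T₁) (hT₂ : 0 ≤ T₂) (hf : Continuous f) :
    ∫ x, f x ∂rectMeasure T₁ T₂ = ∫ s in (0 : ℝ)..T₁, ∫ t in (0 : ℝ)..T₂, f (s, t) := by
  simp only [intervalIntegral.integral_of_le hT₁, intervalIntegral.integral_of_le hT₂]
  exact setIntegral_prod f (integrable_rectMeasure hf)

lemma integral_rectMeasure_symm (hT₁ : 0 ≤ T₁) (hT₂ : 0 ≤ T₂) (hf : Continuous f) :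
    ∫ x, f x ∂rectMeasure T₁ T₂ = ∫ t in (0 : ℝ)..T₂, ∫ s in (0 : ℝ)..T₁, f (s, t) := by
  have h_int : Integrable f (rectMeasure T₁ T₂) := integrable_rectMeasure hf
  simp only [intervalIntegral.integral_of_le hT₁, intervalIntegral.integral_of_le hT₂]
  rw [rectMeasure, Measure.volume_eq_prod, ← Measure.prod_restrict] at h_int ⊢
  exact integral_prod_symm f h_int

lemma rectCoeff_sub {f g : ℝ × ℝ → ℂ} (hf : Continuous f) (hg : Continuous g) (p : ℤ × ℤ) :
    rectCoeff T₁ T₂ (fun x => f x - g x) p = rectCoeff T₁ T₂ f p - rectCoeff T₁ T₂ g p := by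
  simp only [l2Coeff, mul_sub]
  exact integral_sub (integrable_rectMeasure (by fun_prop)) (integrable_rectMeasure (by fun_prop))

lemma rectCoeff_const_mul (c : ℂ) (f : ℝ × ℝ → ℂ) (p : ℤ × ℤ) :
    rectCoeff T₁ T₂ (fun x => c * f x) p = c * rectCoeff T₁ T₂ f p := by
  simp only [l2Coeff, mul_left_comm _ c, integral_const_mul]

end Rectangle

section Derivatives

variable {T T₁ T₂ : ℝ}

lemma integral_conj_intervalChar_mul_deriv {g g' : ℝ → ℂ} (hg : ∀ x, HasDerivAt g (g' x) x)
    (hg' : Continuous g') (h_per : g T = g 0) (k : ℤ) :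
    ∫ x in (0 : ℝ)..T, conj (intervalChar T k x) * g' x
      = 2 * π * Complex.I * k / T * ∫ x in (0 : ℝ)..T, conj (intervalChar T k x) * g x := by
  simp only [conj_intervalChar]
  rw [intervalIntegral.integral_mul_deriv_eq_deriv_mul
    (fun x _ => hasDerivAt_intervalChar T (-k) x) (fun x _ => hg x)
    (Continuous.intervalIntegrable (by fun_prop) _ _) (hg'.intervalIntegrable _ _),
    intervalChar_period, h_per, sub_self, zero_sub, ← intervalIntegral.integral_const_mul,
    ← intervalIntegral.integral_neg]
  refine intervalIntegral.integral_congr fun x _ => ?_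
  push_cast
  ring

lemma periodic_deriv {E : Type*} [NormedAddCommGroup E] [NormedSpace ℝ E] {g : ℝ → E}
    (hg : Function.Periodic g T) : Function.Periodic (deriv g) T :=
  fun x => by rw [← deriv_comp_add_const, hg.funext]

lemma integral_conj_intervalChar_mul_deriv_deriv {g : ℝ → ℝ} (hg : ContDiff ℝ 2 g)
    (h_per : Function.Periodic g T) (k : ℤ) :
    ∫ x in (0 : ℝ)..T, conj (intervalChar T k x) * ((deriv (deriv g) x : ℝ) : ℂ)
      = -(2 * π * k / T) ^ 2 * ∫ x in (0 : ℝ)..T, conj (intervalChar T k x) * (g x : ℂ) := by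
  have hg_deriv : ContDiff ℝ 1 (deriv g) := ContDiff.deriv' (by rwa [one_add_one_eq_two])
  have h_hasDeriv (x : ℝ) : HasDerivAt (fun y => (g y : ℂ)) (deriv g x : ℝ) x :=
    (hg.differentiable two_ne_zero x).hasDerivAt.ofReal_comp
  have h_hasDeriv₂ (x : ℝ) : HasDerivAt (fun y => ((deriv g y : ℝ) : ℂ))
      (deriv (deriv g) x : ℝ) x :=
    (hg_deriv.differentiable one_ne_zero x).hasDerivAt.ofReal_comp
  have h_cont : Continuous fun x => ((deriv g x : ℝ) : ℂ) :=
    Complex.continuous_ofReal.comp hg_deriv.continuous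
  have h_cont₂ : Continuous fun x => ((deriv (deriv g) x : ℝ) : ℂ) :=
    Complex.continuous_ofReal.comp hg_deriv.continuous_deriv_one
  rw [integral_conj_intervalChar_mul_deriv h_hasDeriv₂ h_cont₂
      (by rw [(periodic_deriv h_per).eq]),
    integral_conj_intervalChar_mul_deriv h_hasDeriv h_cont (by rw [h_per.eq]), ← mul_assoc]
  congr 1
  linear_combination (2 * π * k / T : ℂ) ^ 2 * Complex.I_sq

variable {φ : ℝ × ℝ → ℝ}

lemma deriv_fst_eq_fderiv (hφ : Differentiable ℝ φ) (s t : ℝ) :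
    deriv (fun s' => φ (s', t)) s = fderiv ℝ φ (s, t) (1, 0) :=
  ((hφ (s, t)).hasFDerivAt.comp_hasDerivAt s
    ((hasDerivAt_id s).prodMk (hasDerivAt_const s t))).deriv

lemma deriv_snd_eq_fderiv (hφ : Differentiable ℝ φ) (s t : ℝ) :
    deriv (fun t' => φ (s, t')) t = fderiv ℝ φ (s, t) (0, 1) :=
  ((hφ (s, t)).hasFDerivAt.comp_hasDerivAt t
    ((hasDerivAt_const t s).prodMk (hasDerivAt_id t))).deriv

lemma contDiff_one_fderiv_apply (hφ : ContDiff ℝ 2 φ) (v : ℝ × ℝ) :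
    ContDiff ℝ 1 fun x => fderiv ℝ φ x v :=
  (hφ.fderiv_right (m := 1) (by norm_num)).clm_apply contDiff_const

lemma continuous_pd11 (hφ : ContDiff ℝ 2 φ) : Continuous (pd11 φ) := by
  have hφ' : ContDiff ℝ 1 fun x => fderiv ℝ φ x (1, 0) := contDiff_one_fderiv_apply hφ (1, 0)
  have h_eq : pd11 φ = fun x => fderiv ℝ (fun y => fderiv ℝ φ y (1, 0)) x (1, 0) := by
    funext x
    simp only [pd11, deriv_fst_eq_fderiv (hφ.differentiable two_ne_zero)]
    exact deriv_fst_eq_fderiv (hφ'.differentiable one_ne_zero) x.1 x.2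
  rw [h_eq]
  exact (hφ'.continuous_fderiv one_ne_zero).clm_apply continuous_const

lemma continuous_pd22 (hφ : ContDiff ℝ 2 φ) : Continuous (pd22 φ) := by
  have hφ' : ContDiff ℝ 1 fun x => fderiv ℝ φ x (0, 1) := contDiff_one_fderiv_apply hφ (0, 1)
  have h_eq : pd22 φ = fun x => fderiv ℝ (fun y => fderiv ℝ φ y (0, 1)) x (0, 1) := by
    funext x
    simp only [pd22, deriv_snd_eq_fderiv (hφ.differentiable two_ne_zero)]
    exact deriv_snd_eq_fderiv (hφ'.differentiable one_ne_zero) x.1 x.2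
  rw [h_eq]
  exact (hφ'.continuous_fderiv one_ne_zero).clm_apply continuous_const

lemma rectCoeff_eq_integral_integral (hT₁ : 0 ≤ T₁) (hT₂ : 0 ≤ T₂) {f : ℝ × ℝ → ℂ}
    (hf : Continuous f) (p : ℤ × ℤ) :
    rectCoeff T₁ T₂ f p = ∫ s in (0 : ℝ)..T₁, conj (intervalChar T₁ p.1 s) *
      ∫ t in (0 : ℝ)..T₂, conj (intervalChar T₂ p.2 t) * f (s, t) := by
  rw [rectCoeff, l2Coeff, integral_rectMeasure hT₁ hT₂ (by fun_prop)]
  simp only [rectChar, map_mul, mul_assoc, intervalIntegral.integral_const_mul]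

lemma rectCoeff_eq_integral_integral_symm (hT₁ : 0 ≤ T₁) (hT₂ : 0 ≤ T₂) {f : ℝ × ℝ → ℂ}
    (hf : Continuous f) (p : ℤ × ℤ) :
    rectCoeff T₁ T₂ f p = ∫ t in (0 : ℝ)..T₂, conj (intervalChar T₂ p.2 t) *
      ∫ s in (0 : ℝ)..T₁, conj (intervalChar T₁ p.1 s) * f (s, t) := by
  rw [rectCoeff, l2Coeff, integral_rectMeasure_symm hT₁ hT₂ (by fun_prop)]
  simp only [rectChar, map_mul, mul_comm (conj (intervalChar T₁ p.1 _)), mul_assoc,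
    intervalIntegral.integral_const_mul]

lemma rectCoeff_pd11 (hT₁ : 0 ≤ T₁) (hT₂ : 0 ≤ T₂) (hφ : ContDiff ℝ 2 φ)
    (h_per : ∀ x : ℝ × ℝ, φ (x.1 + T₁, x.2) = φ x) (p : ℤ × ℤ) :
    rectCoeff T₁ T₂ (fun x => (pd11 φ x : ℂ)) p
      = -(2 * π * p.1 / T₁) ^ 2 * rectCoeff T₁ T₂ (fun x => (φ x : ℂ)) p := by
  have h_pd := continuous_pd11 hφ
  have hφ_cont := hφ.continuous
  rw [rectCoeff_eq_integral_integral_symm hT₁ hT₂ (by fun_prop),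
    rectCoeff_eq_integral_integral_symm hT₁ hT₂ (by fun_prop),
    ← intervalIntegral.integral_const_mul]
  refine intervalIntegral.integral_congr fun t _ => ?_
  have h_slice : ContDiff ℝ 2 fun s => φ (s, t) := hφ.comp (contDiff_id.prodMk contDiff_const)
  rw [mul_left_comm]
  exact congrArg _ (integral_conj_intervalChar_mul_deriv_deriv h_slice (fun s => h_per (s, t)) p.1)

lemma rectCoeff_pd22 (hT₁ : 0 ≤ T₁) (hT₂ : 0 ≤ T₂) (hφ : ContDiff ℝ 2 φ)
    (h_per : ∀ x : ℝ × ℝ, φ (x.1, x.2 + T₂) = φ x) (p : ℤ × ℤ) :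
    rectCoeff T₁ T₂ (fun x => (pd22 φ x : ℂ)) p
      = -(2 * π * p.2 / T₂) ^ 2 * rectCoeff T₁ T₂ (fun x => (φ x : ℂ)) p := by
  have h_pd := continuous_pd22 hφ
  have hφ_cont := hφ.continuous
  rw [rectCoeff_eq_integral_integral hT₁ hT₂ (by fun_prop),
    rectCoeff_eq_integral_integral hT₁ hT₂ (by fun_prop), ← intervalIntegral.integral_const_mul]
  refine intervalIntegral.integral_congr fun s _ => ?_
  have h_slice : ContDiff ℝ 2 fun t => φ (s, t) := hφ.comp (contDiff_const.prodMk contDiff_id)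
  rw [mul_left_comm]
  exact congrArg _ (integral_conj_intervalChar_mul_deriv_deriv h_slice (fun t => h_per (s, t)) p.2)

end Derivatives

section Projection

variable {T₁ T₂ : ℝ} {ψ : ℝ × ℝ → ℝ}

@[fun_prop]
lemma continuous_projP (hψ : Continuous ψ) : Continuous (projP ψ) := by
  have h_mean : Continuous fun s => ∫ t in (0 : ℝ)..(2 * π), ψ (s, t) :=
    intervalIntegral.continuous_parametric_intervalIntegral_of_continuous'
      (f := fun s t => ψ (s, t)) hψ 0 (2 * π)
  exact hψ.sub ((h_mean.comp continuous_fst).const_mul _)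

lemma integral_projP (hψ : Continuous ψ) (s : ℝ) :
    ∫ t in (0 : ℝ)..(2 * π), projP ψ (s, t) = 0 := by
  simp only [projP]
  rw [intervalIntegral.integral_sub (Continuous.intervalIntegrable (by fun_prop) _ _)
    intervalIntegrable_const, intervalIntegral.integral_const, sub_zero, smul_eq_mul, ← mul_assoc,
    mul_one_div_cancel two_pi_pos.ne', one_mul, sub_self]

lemma integral_conj_intervalChar_mul_projP (hψ : Continuous ψ) (s : ℝ) (k : ℤ) :
    ∫ t in (0 : ℝ)..(2 * π), conj (intervalChar (2 * π) k t) * (projP ψ (s, t) : ℂ)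
      = if k = 0 then 0
        else ∫ t in (0 : ℝ)..(2 * π), conj (intervalChar (2 * π) k t) * (ψ (s, t) : ℂ) := by
  split_ifs with hk
  · simp only [hk, intervalChar_zero]
    rw [intervalIntegral.integral_const_mul, intervalIntegral.integral_ofReal, integral_projP hψ,
      Complex.ofReal_zero, mul_zero]
  · simp only [projP, Complex.ofReal_sub, mul_sub]
    rw [intervalIntegral.integral_sub (Continuous.intervalIntegrable (by fun_prop) _ _)
      (Continuous.intervalIntegrable (by fun_prop) _ _), intervalIntegral.integral_mul_const,
      integral_conj_intervalChar two_pi_pos hk, zero_mul, sub_zero]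

lemma rectCoeff_projP (hT₁ : 0 ≤ T₁) (hψ : Continuous ψ) (p : ℤ × ℤ) :
    rectCoeff T₁ (2 * π) (fun x => (projP ψ x : ℂ)) p
      = if p.2 = 0 then 0 else rectCoeff T₁ (2 * π) (fun x => (ψ x : ℂ)) p := by
  rw [rectCoeff_eq_integral_integral hT₁ two_pi_pos.le (by fun_prop),
    rectCoeff_eq_integral_integral hT₁ two_pi_pos.le (by fun_prop)]
  simp only [integral_conj_intervalChar_mul_projP hψ]
  split_ifs <;> simp

lemma projP_ae_eq_self (hT₁ : 0 < T₁) (hψ : Continuous ψ)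
    (hzero : ∀ p : ℤ × ℤ, p.2 = 0 → rectCoeff T₁ (2 * π) (fun x => (ψ x : ℂ)) p = 0) :
    projP ψ =ᵐ[rectMeasure T₁ (2 * π)] ψ := by
  have h_coeff (p : ℤ × ℤ) :
      rectCoeff T₁ (2 * π) (fun x => (projP ψ x : ℂ) - (ψ x : ℂ)) p = 0 := by
    rw [rectCoeff_sub (by fun_prop) (by fun_prop), rectCoeff_projP hT₁.le hψ]
    split_ifs with hp
    · rw [hzero p hp, sub_zero]
    · exact sub_self _
  filter_upwards [(isL2Basis_rectChar hT₁ two_pi_pos).ae_eq_zero _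
    (memLp_two_rectMeasure (by fun_prop)) h_coeff] with x hx
  exact_mod_cast sub_eq_zero.1 hx

end Projection

section Eigenfunctions

/-- The symbol of `-Δ` on the torus with periods `T₁` and `T₂`: its eigenvalue on the mode
`rectChar T₁ T₂ p`. -/
noncomputable def laplacianSymbol (T₁ T₂ : ℝ) (p : ℤ × ℤ) : ℝ :=
  (2 * π * p.1 / T₁) ^ 2 + (2 * π * p.2 / T₂) ^ 2

lemma laplacianSymbol_nonneg (T₁ T₂ : ℝ) (p : ℤ × ℤ) : 0 ≤ laplacianSymbol T₁ T₂ p :=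
  add_nonneg (sq_nonneg _) (sq_nonneg _)

/-- `φ` is a doubly periodic `C²` solution of `-Δφ - P(V · Pφ) = -lam φ`, with period `T` in the
first variable and `2π` in the second. -/
structure IsPeriodicEigenfunction (T : ℝ) (V : ℝ × ℝ → ℝ) (lam : ℝ) (φ : ℝ × ℝ → ℝ) : Prop where
  contDiff : ContDiff ℝ 2 φ
  periodic_fst : ∀ x : ℝ × ℝ, φ (x.1 + T, x.2) = φ x
  periodic_snd : ∀ x : ℝ × ℝ, φ (x.1, x.2 + 2 * π) = φ x
  eigen : ∀ x, -(pd11 φ x + pd22 φ x) - projP (fun y => V y * projP φ y) x = -lam * φ x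

namespace IsPeriodicEigenfunction

variable {T lam : ℝ} {V φ : ℝ × ℝ → ℝ}

lemma rectCoeff_projP_mul (hφ : IsPeriodicEigenfunction T V lam φ) (hT : 0 ≤ T) (p : ℤ × ℤ) :
    rectCoeff T (2 * π) (fun x => (projP (fun y => V y * projP φ y) x : ℂ)) p
      = (lam + laplacianSymbol T (2 * π) p : ℝ) * rectCoeff T (2 * π) (fun x => (φ x : ℂ)) p := by
  have h_cont := hφ.contDiff.continuous
  have h_pd11 := continuous_pd11 hφ.contDiff
  have h_pd22 := continuous_pd22 hφ.contDiff
  have h_eigen (x : ℝ × ℝ) : (projP (fun y => V y * projP φ y) x : ℂ)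
      = lam * (φ x : ℂ) - (pd11 φ x : ℂ) - (pd22 φ x : ℂ) := by
    have h_eq := hφ.eigen x
    exact_mod_cast (by linarith : projP (fun y => V y * projP φ y) x
      = lam * φ x - pd11 φ x - pd22 φ x)
  simp only [h_eigen]
  rw [rectCoeff_sub (by fun_prop) (by fun_prop), rectCoeff_sub (by fun_prop) (by fun_prop),
    rectCoeff_const_mul, rectCoeff_pd11 hT two_pi_pos.le hφ.contDiff hφ.periodic_fst,
    rectCoeff_pd22 hT two_pi_pos.le hφ.contDiff hφ.periodic_snd, laplacianSymbol]
  push_cast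
  ring

lemma rectCoeff_eq_zero (hφ : IsPeriodicEigenfunction T V lam φ) (hT : 0 ≤ T) (hlam : 0 < lam)
    (hV : Continuous V) {p : ℤ × ℤ} (hp : p.2 = 0) :
    rectCoeff T (2 * π) (fun x => (φ x : ℂ)) p = 0 := by
  have h_cont := hφ.contDiff.continuous
  have h_coeff := hφ.rectCoeff_projP_mul hT p
  rw [rectCoeff_projP hT (by fun_prop), if_pos hp, eq_comm, mul_eq_zero] at h_coeff
  refine h_coeff.resolve_left (Complex.ofReal_ne_zero.2 ?_)
  exact (add_pos_of_pos_of_nonneg hlam (laplacianSymbol_nonneg T (2 * π) p)).ne'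

lemma rectCoeff_mul (hφ : IsPeriodicEigenfunction T V lam φ) (hT : 0 < T) (hlam : 0 < lam)
    (hV : Continuous V) {p : ℤ × ℤ} (hp : p.2 ≠ 0) :
    rectCoeff T (2 * π) (fun x => ((V x * φ x : ℝ) : ℂ)) p
      = (lam + laplacianSymbol T (2 * π) p : ℝ) * rectCoeff T (2 * π) (fun x => (φ x : ℂ)) p := by
  have h_cont := hφ.contDiff.continuous
  rw [← hφ.rectCoeff_projP_mul hT.le, rectCoeff_projP hT.le (by fun_prop), if_neg hp]
  refine integral_congr_ae ?_
  filter_upwards [projP_ae_eq_self hT h_cont fun p => hφ.rectCoeff_eq_zero hT.le hlam hV]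
    with x hx
  rw [hx]

lemma laplacianSymbol_mul_norm_rectCoeff_sq (hφ : IsPeriodicEigenfunction T V lam φ) (hT : 0 < T)
    (hlam : 0 < lam) (hV : Continuous V) (p : ℤ × ℤ) :
    ((laplacianSymbol T (2 * π) p * ‖rectCoeff T (2 * π) (fun x => (φ x : ℂ)) p‖ ^ 2 : ℝ) : ℂ)
      = conj (rectCoeff T (2 * π) (fun x => (φ x : ℂ)) p)
          * rectCoeff T (2 * π) (fun x => ((V x * φ x : ℝ) : ℂ)) p
        - lam * (conj (rectCoeff T (2 * π) (fun x => (φ x : ℂ)) p)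
          * rectCoeff T (2 * π) (fun x => (φ x : ℂ)) p) := by
  rcases eq_or_ne p.2 0 with hp | hp
  · simp [hφ.rectCoeff_eq_zero hT.le hlam hV hp]
  · rw [hφ.rectCoeff_mul hT hlam hV hp, Complex.ofReal_mul, Complex.ofReal_pow,
      ← Complex.conj_mul']
    push_cast
    ring

lemma hasSum_laplacianSymbol_mul (hφ : IsPeriodicEigenfunction T V lam φ) (hT : 0 < T)
    (hlam : 0 < lam) (hV : Continuous V) :
    HasSum (fun p => laplacianSymbol T (2 * π) p * ‖rectCoeff T (2 * π) (fun x => (φ x : ℂ)) p‖ ^ 2)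
      (∫ x, V x * φ x ^ 2 ∂rectMeasure T (2 * π) - lam * ∫ x, φ x ^ 2 ∂rectMeasure T (2 * π)) := by
  have h_cont := hφ.contDiff.continuous
  have h_basis := isL2Basis_rectChar hT two_pi_pos
  have h_memLp : MemLp (fun x => (φ x : ℂ)) 2 (rectMeasure T (2 * π)) :=
    memLp_two_rectMeasure (by fun_prop)
  have h_memLp_mul : MemLp (fun x => ((V x * φ x : ℝ) : ℂ)) 2 (rectMeasure T (2 * π)) :=
    memLp_two_rectMeasure (by fun_prop)
  have h_sum := (h_basis.hasSum_conj_l2Coeff_mul h_memLp h_memLp_mul).sub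
    ((h_basis.hasSum_conj_l2Coeff_mul h_memLp h_memLp).mul_left (lam : ℂ))
  simp only [Complex.conj_ofReal, ← Complex.ofReal_mul, integral_complex_ofReal,
    ← Complex.ofReal_sub, mul_left_comm (φ _), ← pow_two (φ _)] at h_sum
  rw [← Complex.hasSum_ofReal]
  simp only [hφ.laplacianSymbol_mul_norm_rectCoeff_sq hT hlam hV]
  exact h_sum

end IsPeriodicEigenfunction

end Eigenfunctions

section LiebThirring

variable {α : ℝ} {ι : Type*} [Fintype ι]

lemma laplacianSymbol_two_pi_div (α : ℝ) (p : ℤ × ℤ) :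
    laplacianSymbol (2 * π / α) (2 * π) p = (α * p.1) ^ 2 + (p.2 : ℝ) ^ 2 := by
  have h_pi : 2 * π ≠ 0 := two_pi_pos.ne'
  rw [laplacianSymbol, mul_div_cancel_left₀ _ h_pi, div_div_eq_mul_div, mul_assoc,
    mul_div_cancel_left₀ _ h_pi, mul_comm α]

lemma sum_norm_rectChar_sq_lowFreq_le (hα : 0 < α) (hα_le : α ≤ 1) {R : ℝ} (hR : 0 < R)
    (x : ℝ × ℝ) :
    ∑ p ∈ lowFreq α R, ‖rectChar (2 * π / α) (2 * π) p x‖ ^ 2 ≤ π / 36 * R ^ 2 := by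
  have h_period : 0 < 2 * π / α := div_pos two_pi_pos hα
  simp only [norm_rectChar_sq h_period two_pi_pos, Finset.sum_const, nsmul_eq_mul]
  calc (lowFreq α R).card * (2 * π / α * (2 * π))⁻¹
      = α * (lowFreq α R).card / (4 * π ^ 2) := by field_simp; norm_num
    _ ≤ π ^ 3 / 9 * R ^ 2 / (4 * π ^ 2) :=
        div_le_div_of_nonneg_right (mul_card_lowFreq_le hα hα_le hR) (by positivity)
    _ = π / 36 * R ^ 2 := by field_simp; norm_num

lemma lintegral_sq_sum_norm_sq_le_of_rectCoeff_eq_zero (hα : 0 < α) (hα_le : α ≤ 1)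
    {f : ι → ℝ × ℝ → ℂ} (hf : ∀ n, MemLp (f n) 2 (rectMeasure (2 * π / α) (2 * π)))
    (hf_on : Orthonormal ℂ fun n => (hf n).toLp (f n))
    (hzero : ∀ n (p : ℤ × ℤ), p.2 = 0 → rectCoeff (2 * π / α) (2 * π) (f n) p = 0) :
    ∫⁻ x, ENNReal.ofReal ((∑ n, ‖f n x‖ ^ 2) ^ 2 / (6 * (π / 36)))
        ∂rectMeasure (2 * π / α) (2 * π)
      ≤ ∑ n, ∑' p, ENNReal.ofReal (laplacianSymbol (2 * π / α) (2 * π) p) *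
          ENNReal.ofReal (‖rectCoeff (2 * π / α) (2 * π) (f n) p‖ ^ 2) := by
  refine (isL2Basis_rectChar (div_pos two_pi_pos hα) two_pi_pos).lintegral_sq_sum_norm_sq_le hf
    hf_on (by positivity) fun R hR =>
      ⟨lowFreq α R, sum_norm_rectChar_sq_lowFreq_le hα hα_le hR, fun p hp h_le n => hzero n p ?_⟩
  rw [laplacianSymbol_two_pi_div] at h_le
  exact not_not.1 fun hp₂ => hp (mem_lowFreq hα hR hp₂ h_le)

variable {V : ℝ × ℝ → ℝ} {lam : ι → ℝ} {φ : ι → ℝ × ℝ → ℝ}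

lemma integral_sq_sum_sq_le [DecidableEq ι] (hα : 0 < α) (hα_le : α ≤ 1) (hV : Continuous V)
    (hφ : ∀ n, IsPeriodicEigenfunction (2 * π / α) V (lam n) (φ n)) (hlam : ∀ n, 0 < lam n)
    (h_orth : ∀ n m, ∫ x, φ n x * φ m x ∂rectMeasure (2 * π / α) (2 * π) = if n = m then 1 else 0) :
    ∫ x, (∑ n, φ n x ^ 2) ^ 2 / (6 * (π / 36)) ∂rectMeasure (2 * π / α) (2 * π)
      ≤ ∑ n, (∫ x, V x * φ n x ^ 2 ∂rectMeasure (2 * π / α) (2 * π) - lam n) := by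
  have h_period : 0 < 2 * π / α := div_pos two_pi_pos hα
  have h_cont (n : ι) : Continuous (φ n) := (hφ n).contDiff.continuous
  have h_memLp (n : ι) : MemLp (fun x => (φ n x : ℂ)) 2 (rectMeasure (2 * π / α) (2 * π)) :=
    memLp_two_rectMeasure (by fun_prop)
  have h_energy (n : ι) := (hφ n).hasSum_laplacianSymbol_mul h_period (hlam n) hV
  have h_nonneg (n : ι) (p : ℤ × ℤ) : 0 ≤ laplacianSymbol (2 * π / α) (2 * π) p *
      ‖rectCoeff (2 * π / α) (2 * π) (fun x => (φ n x : ℂ)) p‖ ^ 2 :=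
    mul_nonneg (laplacianSymbol_nonneg _ _ p) (sq_nonneg _)
  have h_kinetic := lintegral_sq_sum_norm_sq_le_of_rectCoeff_eq_zero hα hα_le h_memLp
    (orthonormal_toLp_ofReal h_memLp h_orth)
    fun n p => (hφ n).rectCoeff_eq_zero h_period.le (hlam n) hV
  simp only [pow_two (φ _ _), h_orth, if_true, mul_one] at h_energy
  simp only [← ENNReal.ofReal_mul (laplacianSymbol_nonneg _ _ _),
    ← ENNReal.ofReal_tsum_of_nonneg (h_nonneg _) (h_energy _).summable, (h_energy _).tsum_eq,
    Complex.norm_real, Real.norm_eq_abs, sq_abs] at h_kinetic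
  simp only [pow_two (φ _ _)] at h_kinetic ⊢
  rwa [← ofReal_integral_eq_lintegral_ofReal (integrable_rectMeasure (by fun_prop))
      (Filter.Eventually.of_forall fun x => by positivity),
    ← ENNReal.ofReal_sum_of_nonneg fun n _ => (h_energy n).nonneg (h_nonneg n),
    ENNReal.ofReal_le_ofReal_iff
      (Finset.sum_nonneg fun n _ => (h_energy n).nonneg (h_nonneg n))] at h_kinetic

lemma mul_le_sq_div_add (v ρ : ℝ) : v * ρ ≤ ρ ^ 2 / (6 * (π / 36)) + π / 24 * v ^ 2 := by
  have h_sq : 0 ≤ 6 / π * (ρ - π / 12 * v) ^ 2 := by positivity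
  calc v * ρ ≤ v * ρ + 6 / π * (ρ - π / 12 * v) ^ 2 := le_add_of_nonneg_right h_sq
    _ = ρ ^ 2 / (6 * (π / 36)) + π / 24 * v ^ 2 := by field_simp; ring

theorem stmt_1_general [DecidableEq ι] (hα : 0 < α) (hα_le : α ≤ 1) (hV : Continuous V)
    (hφ : ∀ n, IsPeriodicEigenfunction (2 * π / α) V (lam n) (φ n)) (hlam : ∀ n, 0 < lam n)
    (h_orth : ∀ n m, ∫ x, φ n x * φ m x ∂rectMeasure (2 * π / α) (2 * π) = if n = m then 1 else 0) :
    ∑ n, lam n ≤ π / 24 * ∫ x, V x ^ 2 ∂rectMeasure (2 * π / α) (2 * π) := by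
  have h_cont (n : ι) : Continuous (φ n) := (hφ n).contDiff.continuous
  have h_kinetic := integral_sq_sum_sq_le hα hα_le hV hφ hlam h_orth
  have h_potential : ∫ x, V x * ∑ n, φ n x ^ 2 ∂rectMeasure (2 * π / α) (2 * π)
      ≤ ∫ x, (∑ n, φ n x ^ 2) ^ 2 / (6 * (π / 36)) ∂rectMeasure (2 * π / α) (2 * π)
        + π / 24 * ∫ x, V x ^ 2 ∂rectMeasure (2 * π / α) (2 * π) := by
    rw [← integral_const_mul, ← integral_add (integrable_rectMeasure (by fun_prop))
      (integrable_rectMeasure (by fun_prop))]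
    exact integral_mono (integrable_rectMeasure (by fun_prop))
      (integrable_rectMeasure (by fun_prop)) fun x => mul_le_sq_div_add _ _
  simp only [Finset.mul_sum] at h_potential
  rw [integral_finsetSum _ fun n _ => integrable_rectMeasure (by fun_prop)] at h_potential
  rw [Finset.sum_sub_distrib] at h_kinetic
  linarith

end LiebThirring

theorem stmt_1 (α : ℝ) (hα0 : 0 < α) (hα1 : α ≤ 1)
    (V : ℝ × ℝ → ℝ) (hVc : Continuous V) (hV0 : ∀ x, 0 ≤ V x)
    (hVper1 : ∀ x : ℝ × ℝ, V (x.1 + 2 * π / α, x.2) = V x)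
    (hVper2 : ∀ x : ℝ × ℝ, V (x.1, x.2 + 2 * π) = V x)
    (N : ℕ) (φ : Fin N → ℝ × ℝ → ℝ)
    (hφ : ∀ n, ContDiff ℝ (⊤ : ℕ∞) (φ n))
    (hper1 : ∀ n (x : ℝ × ℝ), φ n (x.1 + 2 * π / α, x.2) = φ n x)
    (hper2 : ∀ n (x : ℝ × ℝ), φ n (x.1, x.2 + 2 * π) = φ n x)
    (hortho : ∀ n m, (∫ x in Set.Ioc (0:ℝ) (2 * π / α) ×ˢ Set.Ioc (0:ℝ) (2 * π),
        φ n x * φ m x) = if n = m then 1 else 0)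
    (lam : Fin N → ℝ) (hlam : ∀ n, 0 < lam n)
    (heig : ∀ n x, -(pd11 (φ n) x + pd22 (φ n) x) -
        projP (fun y => V y * projP (φ n) y) x = -(lam n) * φ n x) :
    ∑ n, lam n ≤ (π / 24) *
      ∫ x in Set.Ioc (0:ℝ) (2 * π / α) ×ˢ Set.Ioc (0:ℝ) (2 * π), V x ^ 2 := by
  exact stmt_1_general hα0 hα1 hVc
    (fun n => ⟨(hφ n).of_le (WithTop.coe_le_coe.2 le_top), hper1 n, hper2 n, heig n⟩) hlam hortho
end

section
/- Let L > 0 and consider the square torus T² = (0, L) × (0, L). Let v_1, …, v_m : ℝ² → ℝ² be C¹ vector fields, L-periodic in both variables, with ∫_{T²} v_j(x) dx = 0, div v_j = 0 on ℝ², and orthonormal in L²(T²; ℝ²), i.e. ∫_{T²} ⟨v_i(x), v_j(x)⟩ dx = δ_{ij}. Then ρ_v(x) := ∑_{j=1}^m |v_j(x)|² satisfies ∫_{T²} ρ_v(x)² dx ≤ (3/2) ∑_{j=1}^m ∫_{T²} |∇v_j(x)|² dx. -/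
open Real MeasureTheory

/-- Partial derivative with respect to the first variable. -/
noncomputable def pd1 (f : ℝ × ℝ → ℝ) (x : ℝ × ℝ) : ℝ :=
  deriv (fun s => f (s, x.2)) x.1

/-- Partial derivative with respect to the second variable. -/
noncomputable def pd2 (f : ℝ × ℝ → ℝ) (x : ℝ × ℝ) : ℝ :=
  deriv (fun t => f (x.1, t)) x.2

/-- `|∇v|² = ∑_{i,k=1}^2 (∂_i v^k)²` for a vector field `v : ℝ² → ℝ²`. -/
noncomputable def gradSq (v : ℝ × ℝ → ℝ × ℝ) (x : ℝ × ℝ) : ℝ :=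
  pd1 (fun y => (v y).1) x ^ 2 + pd2 (fun y => (v y).1) x ^ 2 +
    pd1 (fun y => (v y).2) x ^ 2 + pd2 (fun y => (v y).2) x ^ 2

/-!
The proof is Rumin's. Let `Pₙ` be the orthogonal projection onto the divergence-free modes of
frequency `0 < |k|² ≤ n`. Since `div v = 0` leaves a single polarization per nonzero frequency and
there are at most `8n` such frequencies, Bessel's inequality for the orthonormal family `v` gives
`∑ⱼ |Pₙ vⱼ(x)|² ≤ A n` with `A = 8 / L²`. The triangle inequality then yields, pointwise,
`(√ρ - √(A n))₊² ≤ ∑ⱼ |vⱼ - Pₙ vⱼ|²`. Summed over `n ≥ 0`, the left side is at least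
`∫₀^∞ (√ρ - √(A t))₊² dt = ρ² / (6A)`, while the integral of the right side over the torus is, by
the layer-cake formula, `∑ⱼ ∑ₖ |k|² |v̂ⱼ(k)|² = L² / (4π²) ∑ⱼ ∫ |∇vⱼ|²`. This gives the constant
`6A L² / (4π²) = 12 / π² < 3 / 2`.
-/

open scoped ComplexConjugate InnerProductSpace

section Orthonormal

variable {𝕜 H ι : Type*} [RCLike 𝕜] [NormedAddCommGroup H] [InnerProductSpace 𝕜 H]
variable {φ : ι → H}

variable (𝕜) in
/-- The partial sum over `s` of the expansion of `x` in the family `φ`; for orthonormal `φ`, the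
orthogonal projection of `x` onto the span of `φ k`, `k ∈ s`. -/
noncomputable def partialExpansion (φ : ι → H) (s : Finset ι) (x : H) : H :=
  ∑ k ∈ s, ⟪φ k, x⟫_𝕜 • φ k

lemma norm_sum_smul_sq_of_orthonormal (hφ : Orthonormal 𝕜 φ) (s : Finset ι) (c : ι → 𝕜) :
    ‖∑ k ∈ s, c k • φ k‖ ^ 2 = ∑ k ∈ s, ‖c k‖ ^ 2 := by
  rw [@norm_sq_eq_re_inner 𝕜, hφ.inner_sum, map_sum]
  refine Finset.sum_congr rfl fun k _ => ?_
  rw [RCLike.conj_mul, ← RCLike.ofReal_pow, RCLike.ofReal_re]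

lemma norm_sub_partialExpansion_sq (hφ : Orthonormal 𝕜 φ) (s : Finset ι) (x : H) :
    ‖x - partialExpansion 𝕜 φ s x‖ ^ 2 = ‖x‖ ^ 2 - ∑ k ∈ s, ‖⟪φ k, x⟫_𝕜‖ ^ 2 := by
  have hcross : RCLike.re ⟪x, partialExpansion 𝕜 φ s x⟫_𝕜 = ∑ k ∈ s, ‖⟪φ k, x⟫_𝕜‖ ^ 2 := by
    rw [partialExpansion, inner_sum, map_sum]
    refine Finset.sum_congr rfl fun k _ => ?_
    rw [inner_smul_right, inner_mul_symm_re_eq_norm, norm_mul, norm_inner_symm x, sq]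
  rw [@norm_sub_sq 𝕜, hcross, partialExpansion, norm_sum_smul_sq_of_orthonormal hφ]
  ring

lemma hasSum_norm_sub_partialExpansion_sq [DecidableEq ι] (hφ : Orthonormal 𝕜 φ) {x : H}
    (hx : HasSum (fun k => ‖⟪φ k, x⟫_𝕜‖ ^ 2) (‖x‖ ^ 2)) (s : Finset ι) :
    HasSum (fun k => if k ∈ s then 0 else ‖⟪φ k, x⟫_𝕜‖ ^ 2)
      (‖x - partialExpansion 𝕜 φ s x‖ ^ 2) := by
  have hs : HasSum (fun k => if k ∈ s then ‖⟪φ k, x⟫_𝕜‖ ^ 2 else 0)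
      (∑ k ∈ s, ‖⟪φ k, x⟫_𝕜‖ ^ 2) := by
    rw [← Finset.sum_congr rfl fun k (hk : k ∈ s) => if_pos hk]
    exact hasSum_sum_of_ne_finset_zero fun k hk => if_neg hk
  rw [norm_sub_partialExpansion_sq hφ]
  refine (hx.sub hs).congr_fun fun k => ?_
  split_ifs <;> simp

lemma sum_range_ite_le_mul {a : ℝ} (ha : 0 ≤ a) (q N : ℕ) :
    ∑ n ∈ Finset.range N, (if q ≤ n then 0 else a) ≤ q * a := by
  have hcard : ((Finset.range N).filter (¬q ≤ ·)).card ≤ q := by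
    refine (Finset.card_le_card fun n hn => ?_).trans_eq (Finset.card_range q)
    simpa using (Finset.mem_filter.1 hn).2
  rw [Finset.sum_ite, Finset.sum_const_zero, zero_add, Finset.sum_const, nsmul_eq_mul]
  gcongr

-- Layer-cake formula: the coefficient at `k` is counted once for every `n < q k`.
lemma sum_norm_sub_partialExpansion_sq_le (hφ : Orthonormal 𝕜 φ) {q : ι → ℕ} {S : ℕ → Finset ι}
    (hS : ∀ n k, k ∈ S n ↔ q k ≤ n) {x : H} {e : ℝ}
    (hx : HasSum (fun k => ‖⟪φ k, x⟫_𝕜‖ ^ 2) (‖x‖ ^ 2))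
    (he : HasSum (fun k => q k * ‖⟪φ k, x⟫_𝕜‖ ^ 2) e) (N : ℕ) :
    ∑ n ∈ Finset.range N, ‖x - partialExpansion 𝕜 φ (S n) x‖ ^ 2 ≤ e := by
  classical
  refine hasSum_le (fun k => ?_)
    (hasSum_sum fun n _ => hasSum_norm_sub_partialExpansion_sq hφ hx (S n)) he
  simp only [hS]
  exact sum_range_ite_le_mul (sq_nonneg _) (q k) N

-- Coordinatewise this is Bessel's inequality for `v` at the vectors `∑ conj (z k) • φ k`.
lemma sum_norm_sum_inner_smul_sq_le {J E : Type*} [Fintype J] [NormedAddCommGroup E]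
    [InnerProductSpace 𝕜 E] [FiniteDimensional 𝕜 E] {v : J → H} (hφ : Orthonormal 𝕜 φ)
    (hv : Orthonormal 𝕜 v) (s : Finset ι) (z : ι → E) :
    ∑ j, ‖∑ k ∈ s, ⟪φ k, v j⟫_𝕜 • z k‖ ^ 2 ≤ ∑ k ∈ s, ‖z k‖ ^ 2 := by
  let b := stdOrthonormalBasis 𝕜 E
  have hscalar (i) : ∑ j, ‖⟪b i, ∑ k ∈ s, ⟪φ k, v j⟫_𝕜 • z k⟫_𝕜‖ ^ 2
      ≤ ∑ k ∈ s, ‖⟪b i, z k⟫_𝕜‖ ^ 2 := by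
    let y := ∑ k ∈ s, conj ⟪b i, z k⟫_𝕜 • φ k
    have hinner (j) : ⟪b i, ∑ k ∈ s, ⟪φ k, v j⟫_𝕜 • z k⟫_𝕜 = ⟪y, v j⟫_𝕜 := by
      simp only [y, inner_sum, sum_inner, inner_smul_left, inner_smul_right, RCLike.conj_conj,
        mul_comm]
    calc ∑ j, ‖⟪b i, ∑ k ∈ s, ⟪φ k, v j⟫_𝕜 • z k⟫_𝕜‖ ^ 2
        = ∑ j, ‖⟪v j, y⟫_𝕜‖ ^ 2 := by simp only [hinner, norm_inner_symm y]
      _ ≤ ‖y‖ ^ 2 := hv.sum_inner_products_le y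
      _ = ∑ k ∈ s, ‖⟪b i, z k⟫_𝕜‖ ^ 2 := by
        simp only [y, norm_sum_smul_sq_of_orthonormal hφ, RCLike.norm_conj]
  simp only [← b.sum_sq_norm_inner_right]
  rw [Finset.sum_comm, Finset.sum_comm (s := s)]
  exact Finset.sum_le_sum fun i _ => hscalar i

end Orthonormal

section Rumin

lemma sq_max_sqrt_sub_sqrt_le {J E : Type*} [Fintype J] [SeminormedAddCommGroup E] (a p : J → E)
    {B : ℝ} (hp : ∑ j, ‖p j‖ ^ 2 ≤ B) :
    max (√(∑ j, ‖a j‖ ^ 2) - √B) 0 ^ 2 ≤ ∑ j, ‖a j - p j‖ ^ 2 := by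
  have htriangle : √(∑ j, ‖a j‖ ^ 2) - √(∑ j, ‖p j‖ ^ 2) ≤ √(∑ j, ‖a j - p j‖ ^ 2) := by
    simpa only [PiLp.norm_eq_of_L2, PiLp.sub_apply] using
      norm_sub_norm_le (WithLp.toLp 2 a) (WithLp.toLp 2 p)
  rw [← Real.le_sqrt (le_max_right _ _) (by positivity)]
  exact max_le ((sub_le_sub_left (Real.sqrt_le_sqrt hp) _).trans htriangle) (Real.sqrt_nonneg _)

lemma integral_sq_sub_mul_sqrt {s r : ℝ} (hs : 0 ≤ s) (hr : 0 < r) :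
    ∫ t in (0 : ℝ)..(s / r) ^ 2, (s - r * √t) ^ 2 = s ^ 4 / (6 * r ^ 2) := by
  have hderiv : ∀ t ∈ Set.Ioo 0 ((s / r) ^ 2), HasDerivAt
      (fun t => s ^ 2 * t - 4 / 3 * s * r * (t * √t) + r ^ 2 * t ^ 2 / 2) ((s - r * √t) ^ 2) t := by
    intro t ht
    have hsqrt := Real.hasDerivAt_sqrt ht.1.ne'
    have h := (((hasDerivAt_id t).const_mul (s ^ 2)).sub
      (((hasDerivAt_id t).mul hsqrt).const_mul (4 / 3 * s * r))).add
      ((((hasDerivAt_id t).pow 2).const_mul (r ^ 2)).div_const 2)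
    convert! h using 1
    have hpos := Real.sqrt_pos.2 ht.1
    have hsq := Real.sq_sqrt ht.1.le
    simp only [id]
    field_simp
    linear_combination (6 * √t * r ^ 2 - 4 * s * r) * hsq
  rw [intervalIntegral.integral_eq_sub_of_hasDerivAt_of_le (by positivity) (by fun_prop) hderiv
    (Continuous.intervalIntegrable (by fun_prop) _ _), Real.sqrt_sq (by positivity)]
  field_simp
  ring

lemma sq_le_sum_sq_sqrt_sub_sqrt {A ρ : ℝ} (hA : 0 < A) (hρ : 0 ≤ ρ) {N : ℕ} (hN : ρ ≤ A * N) :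
    ρ ^ 2 ≤ 6 * A * ∑ n ∈ Finset.range N, max (√ρ - √(A * n)) 0 ^ 2 := by
  let g : ℝ → ℝ := fun t => max (√ρ - √(A * t)) 0 ^ 2
  have hg : Continuous g := by fun_prop
  have hanti : Antitone g := fun a b hab => by dsimp only [g]; gcongr
  have hT : (√ρ / √A) ^ 2 = ρ / A := by rw [div_pow, Real.sq_sqrt hρ, Real.sq_sqrt hA.le]
  have hg_eq : Set.EqOn g (fun t => (√ρ - √A * √t) ^ 2) (Set.uIcc 0 (ρ / A)) := by
    intro t ht
    rw [Set.uIcc_of_le (by positivity)] at ht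
    have hle : √(A * t) ≤ √ρ := Real.sqrt_le_sqrt (by rw [mul_comm]; exact (le_div_iff₀ hA).1 ht.2)
    simp only [g, max_eq_left (sub_nonneg.2 hle)]
    rw [Real.sqrt_mul hA.le]
  have hint : ∫ t in (0 : ℝ)..ρ / A, g t = ρ ^ 2 / (6 * A) := by
    rw [intervalIntegral.integral_congr hg_eq, ← hT,
      integral_sq_sub_mul_sqrt (Real.sqrt_nonneg ρ) (Real.sqrt_pos.2 hA), Real.sq_sqrt hA.le,
      show √ρ ^ 4 = (√ρ ^ 2) ^ 2 by ring, Real.sq_sqrt hρ]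
  calc ρ ^ 2 = 6 * A * ∫ t in (0 : ℝ)..ρ / A, g t := by rw [hint]; field_simp
    _ ≤ 6 * A * ∫ t in (0 : ℝ)..N, g t := by
      gcongr
      exact intervalIntegral.integral_mono_interval le_rfl (by positivity)
        ((div_le_iff₀' hA).2 hN) (ae_of_all _ fun t => sq_nonneg _) (hg.intervalIntegrable _ _)
    _ ≤ 6 * A * ∑ n ∈ Finset.range N, g n := by
      gcongr
      simpa only [zero_add] using (hanti.antitoneOn (Set.Icc 0 (0 + (N : ℝ)))).integral_le_sum

variable {X E ι J : Type*} [MeasurableSpace X] {μ : Measure X} [NormedAddCommGroup E]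

lemma integral_norm_sq_eq_norm_sq (𝕜 : Type*) [RCLike 𝕜] [InnerProductSpace 𝕜 E] (f : Lp E 2 μ) :
    ∫ x, ‖f x‖ ^ 2 ∂μ = ‖f‖ ^ 2 := by
  have h := L2.inner_def (𝕜 := 𝕜) f f
  simp only [inner_self_eq_norm_sq_to_K, ← RCLike.ofReal_pow] at h
  rw [integral_ofReal] at h
  exact (RCLike.ofReal_injective h).symm

variable {𝕜 : Type*} [RCLike 𝕜] [InnerProductSpace 𝕜 E]

lemma coeFn_partialExpansion (φ : ι → Lp E 2 μ) (s : Finset ι) (f : Lp E 2 μ) :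
    ⇑(partialExpansion 𝕜 φ s f : Lp E 2 μ) =ᵐ[μ] fun x => ∑ k ∈ s, ⟪φ k, f⟫_𝕜 • φ k x := by
  have hsmul : ∀ᵐ x ∂μ, ∀ k ∈ s, (⟪φ k, f⟫_𝕜 • φ k : Lp E 2 μ) x = ⟪φ k, f⟫_𝕜 • φ k x := by
    rw [Filter.eventually_all_finset]
    exact fun k _ => Lp.coeFn_smul _ _
  filter_upwards [Lp.coeFn_finsetSum s fun k => ⟪φ k, f⟫_𝕜 • φ k, hsmul] with x hsum hsmul
  rw [partialExpansion, hsum, Finset.sum_apply]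
  exact Finset.sum_congr rfl hsmul

variable [FiniteDimensional 𝕜 E] [Fintype J] {φ : ι → Lp E 2 μ} {v : J → Lp E 2 μ}

lemma ae_sum_norm_partialExpansion_sq_le (hφ : Orthonormal 𝕜 φ) (hv : Orthonormal 𝕜 v)
    (s : Finset ι) :
    ∀ᵐ x ∂μ, ∑ j, ‖partialExpansion 𝕜 φ s (v j) x‖ ^ 2 ≤ ∑ k ∈ s, ‖φ k x‖ ^ 2 := by
  filter_upwards [ae_all_iff.2 fun j => coeFn_partialExpansion (𝕜 := 𝕜) φ s (v j)] with x hx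
  simp only [hx]
  exact sum_norm_sum_inner_smul_sq_le hφ hv s fun k => φ k x

lemma ae_sq_sum_norm_sq_le_of_orthonormal (hφ : Orthonormal 𝕜 φ) (hv : Orthonormal 𝕜 v)
    {S : ℕ → Finset ι} {A : ℝ} (hA : 0 < A)
    (hSA : ∀ n, ∀ᵐ x ∂μ, ∑ k ∈ S n, ‖φ k x‖ ^ 2 ≤ A * n)
    {N : ℕ} (hN : ∀ᵐ x ∂μ, ∑ j, ‖v j x‖ ^ 2 ≤ A * N) :
    ∀ᵐ x ∂μ, (∑ j, ‖v j x‖ ^ 2) ^ 2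
      ≤ 6 * A * ∑ n ∈ Finset.range N, ∑ j,
        ‖(v j - partialExpansion 𝕜 φ (S n) (v j) : Lp E 2 μ) x‖ ^ 2 := by
  filter_upwards [hN, ae_all_iff.2 hSA,
    ae_all_iff.2 fun n => ae_sum_norm_partialExpansion_sq_le hφ hv (S n),
    ae_all_iff.2 fun n => ae_all_iff.2 fun j =>
      Lp.coeFn_sub (v j) (partialExpansion 𝕜 φ (S n) (v j))] with x hxN hxS hxP hxsub
  refine (sq_le_sum_sq_sqrt_sub_sqrt hA (by positivity) hxN).trans ?_
  gcongr with n
  simp only [hxsub, Pi.sub_apply]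
  exact sq_max_sqrt_sub_sqrt_le _ _ ((hxP n).trans (hxS n))

theorem integral_sq_sum_norm_sq_le_of_orthonormal (hφ : Orthonormal 𝕜 φ) (hv : Orthonormal 𝕜 v)
    {q : ι → ℕ} {S : ℕ → Finset ι} (hS : ∀ n k, k ∈ S n ↔ q k ≤ n) {A : ℝ} (hA : 0 < A)
    (hSA : ∀ n, ∀ᵐ x ∂μ, ∑ k ∈ S n, ‖φ k x‖ ^ 2 ≤ A * n)
    {C : ℝ} (hC : ∀ᵐ x ∂μ, ∑ j, ‖v j x‖ ^ 2 ≤ C)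
    (hparseval : ∀ j, HasSum (fun k => ‖⟪φ k, v j⟫_𝕜‖ ^ 2) (‖v j‖ ^ 2)) {e : J → ℝ}
    (he : ∀ j, HasSum (fun k => q k * ‖⟪φ k, v j⟫_𝕜‖ ^ 2) (e j)) :
    ∫ x, (∑ j, ‖v j x‖ ^ 2) ^ 2 ∂μ ≤ 6 * A * ∑ j, e j := by
  obtain ⟨N, hN⟩ := exists_nat_ge (C / A)
  have hCN : ∀ᵐ x ∂μ, ∑ j, ‖v j x‖ ^ 2 ≤ A * N :=
    hC.mono fun x hx => hx.trans ((div_le_iff₀' hA).1 hN)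
  let r (n : ℕ) (j : J) : Lp E 2 μ := v j - partialExpansion 𝕜 φ (S n) (v j)
  have hr (n j) : Integrable (fun x => ‖r n j x‖ ^ 2) μ :=
    (memLp_two_iff_integrable_sq_norm (Lp.aestronglyMeasurable _)).1 (Lp.memLp (r n j))
  calc ∫ x, (∑ j, ‖v j x‖ ^ 2) ^ 2 ∂μ
      ≤ ∫ x, 6 * A * ∑ n ∈ Finset.range N, ∑ j, ‖r n j x‖ ^ 2 ∂μ :=
        integral_mono_of_nonneg (ae_of_all _ fun x => sq_nonneg _)
          ((integrable_finsetSum _ fun n _ => integrable_finsetSum _ fun j _ => hr n j).const_mul _)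
          (ae_sq_sum_norm_sq_le_of_orthonormal hφ hv hA hSA hCN)
    _ = 6 * A * ∑ j, ∑ n ∈ Finset.range N, ‖r n j‖ ^ 2 := by
        rw [integral_const_mul, Finset.sum_comm,
          integral_finsetSum _ fun n _ => integrable_finsetSum _ fun j _ => hr n j]
        simp only [integral_finsetSum _ fun j _ => hr _ j, integral_norm_sq_eq_norm_sq 𝕜]
    _ ≤ 6 * A * ∑ j, e j := by
        gcongr with j
        exact sum_norm_sub_partialExpansion_sq_le hφ hS (hparseval j) (he j) N

end Rumin

section TorusSquare

/-- The fundamental domain `(0, L]²` of the torus `ℝ² / (Lℤ)²`. -/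
def torusSquare (L : ℝ) : Set (ℝ × ℝ) := Set.Ioc 0 L ×ˢ Set.Ioc 0 L

/-- The Fourier mode of frequency `k`, normalised to have unit norm in `L²(torusSquare L)`. -/
noncomputable def torusMode (L : ℝ) (k : ℤ × ℤ) (x : ℝ × ℝ) : ℂ :=
  (L : ℂ)⁻¹ * Complex.exp (2 * π * Complex.I * (k.1 * x.1 + k.2 * x.2) / L)

/-- The Fourier coefficient `⟪torusMode L k, f⟫` of `f` in `L²(torusSquare L)`. -/
noncomputable def torusCoeff (L : ℝ) (f : ℝ × ℝ → ℂ) (k : ℤ × ℤ) : ℂ :=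
  ∫ x in torusSquare L, conj (torusMode L k x) * f x

variable {L : ℝ}

lemma measurableSet_torusSquare : MeasurableSet (torusSquare L) :=
  measurableSet_Ioc.prod measurableSet_Ioc

lemma torusSquare_subset_Icc : torusSquare L ⊆ Set.Icc (0, 0) (L, L) := by
  rw [← Set.Icc_prod_Icc]
  exact Set.prod_mono Set.Ioc_subset_Icc_self Set.Ioc_subset_Icc_self

lemma exists_norm_le_on_torusSquare {E : Type*} [SeminormedAddCommGroup E] {f : ℝ × ℝ → E}
    (hf : Continuous f) (L : ℝ) : ∃ C, ∀ x ∈ torusSquare L, ‖f x‖ ≤ C := by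
  have hcompact : IsCompact (Set.Icc ((0 : ℝ), (0 : ℝ)) (L, L)) := isCompact_Icc
  obtain ⟨C, hC⟩ := hcompact.exists_bound_of_continuousOn hf.continuousOn
  exact ⟨C, fun x hx => hC x (torusSquare_subset_Icc hx)⟩

lemma integrableOn_torusSquare {E : Type*} [NormedAddCommGroup E] {f : ℝ × ℝ → E}
    (hf : Continuous f) : IntegrableOn f (torusSquare L) :=
  (hf.continuousOn.integrableOn_compact isCompact_Icc).mono_set torusSquare_subset_Icc

lemma continuous_torusMode (L : ℝ) (k : ℤ × ℤ) : Continuous (torusMode L k) := by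
  unfold torusMode
  fun_prop

lemma norm_torusMode (hL : 0 ≤ L) (k : ℤ × ℤ) (x : ℝ × ℝ) : ‖torusMode L k x‖ = L⁻¹ := by
  have hphase : (2 * π * Complex.I * (k.1 * x.1 + k.2 * x.2) / L : ℂ)
      = ((2 * π * (k.1 * x.1 + k.2 * x.2) / L : ℝ) : ℂ) * Complex.I := by push_cast; ring
  rw [torusMode, hphase, norm_mul, Complex.norm_exp_ofReal_mul_I, mul_one, norm_inv,
    Complex.norm_of_nonneg hL]

lemma conj_torusMode (k : ℤ × ℤ) (x : ℝ × ℝ) : conj (torusMode L k x) = torusMode L (-k) x := by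
  simp only [torusMode, map_mul, map_inv₀, Complex.conj_ofReal, ← Complex.exp_conj, map_div₀,
    map_add, map_ofNat, Complex.conj_I, map_intCast, Prod.fst_neg, Prod.snd_neg, Int.cast_neg]
  ring_nf

lemma torusMode_right_edge (hL : L ≠ 0) (k : ℤ × ℤ) (y : ℝ) :
    torusMode L k (L, y) = torusMode L k (0, y) := by
  have hL' : (L : ℂ) ≠ 0 := Complex.ofReal_ne_zero.2 hL
  rw [torusMode, torusMode, (Complex.exp_eq_exp_iff_exists_int).2 ⟨k.1, ?_⟩]
  push_cast
  field_simp
  ring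

lemma torusMode_top_edge (hL : L ≠ 0) (k : ℤ × ℤ) (x : ℝ) :
    torusMode L k (x, L) = torusMode L k (x, 0) := by
  have hL' : (L : ℂ) ≠ 0 := Complex.ofReal_ne_zero.2 hL
  rw [torusMode, torusMode, (Complex.exp_eq_exp_iff_exists_int).2 ⟨k.2, ?_⟩]
  push_cast
  field_simp
  ring

lemma contDiff_torusMode (L : ℝ) (k : ℤ × ℤ) : ContDiff ℝ 1 (torusMode L k) := by
  have hofReal : ContDiff ℝ 1 Complex.ofReal := Complex.ofRealCLM.contDiff
  unfold torusMode
  fun_prop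

lemma fderiv_torusMode_apply (k : ℤ × ℤ) (x u : ℝ × ℝ) :
    fderiv ℝ (torusMode L k) x u
      = 2 * π * Complex.I / L * (k.1 * u.1 + k.2 * u.2) * torusMode L k x := by
  let phase : ℝ × ℝ →L[ℝ] ℂ := (2 * π * Complex.I / L : ℂ) •
    ((k.1 : ℂ) • Complex.ofRealCLM ∘L ContinuousLinearMap.fst ℝ ℝ ℝ
      + (k.2 : ℂ) • Complex.ofRealCLM ∘L ContinuousLinearMap.snd ℝ ℝ ℝ)
  have hphase (y : ℝ × ℝ) : phase y = 2 * π * Complex.I / L * (k.1 * y.1 + k.2 * y.2) := rfl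
  have hmode : torusMode L k = fun y => (L : ℂ)⁻¹ * Complex.exp (phase y) := by
    funext y
    rw [torusMode, hphase, div_mul_eq_mul_div]
  rw [hmode, (phase.hasFDerivAt.cexp.const_mul (L : ℂ)⁻¹).fderiv]
  simp only [smul_apply, smul_eq_mul, ← hphase]
  ring

end TorusSquare

section Parseval

-- Mathlib normalises the measure on the unit torus by instances local to its own file.
noncomputable local instance : MeasureSpace UnitAddCircle := ⟨AddCircle.haarAddCircle⟩

local instance : IsProbabilityMeasure (volume : Measure UnitAddCircle) :=
  inferInstanceAs (IsProbabilityMeasure AddCircle.haarAddCircle)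

/-- The representative in `torusSquare L` of a point of the unit torus, dilated by `L`. It carries
integrals, modes and coefficients on `torusSquare L` over to Mathlib's `UnitAddTorus`. -/
noncomputable def torusRepr (L : ℝ) (t : UnitAddTorus (Fin 2)) : ℝ × ℝ :=
  L • ((AddCircle.equivIoc 1 0 (t 0) : ℝ), (AddCircle.equivIoc 1 0 (t 1) : ℝ))

variable {L : ℝ}

lemma measurable_torusRepr (L : ℝ) : Measurable (torusRepr L) := by
  have hcoord (i : Fin 2) : Measurable fun t : UnitAddTorus (Fin 2) =>
      (AddCircle.equivIoc 1 0 (t i) : ℝ) :=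
    measurable_subtype_coe.comp
      ((AddCircle.measurableEquivIoc 1 0).measurable.comp (measurable_pi_apply i))
  exact ((hcoord 0).prodMk (hcoord 1)).const_smul L

lemma torusRepr_mem_torusSquare (hL : 0 < L) (t : UnitAddTorus (Fin 2)) :
    torusRepr L t ∈ torusSquare L := by
  have hcoord (i : Fin 2) : L * (AddCircle.equivIoc 1 0 (t i) : ℝ) ∈ Set.Ioc 0 L := by
    obtain ⟨hpos, hle⟩ := (AddCircle.equivIoc (1 : ℝ) 0 (t i)).2
    exact ⟨mul_pos hL hpos, mul_le_of_le_one_right hL.le (hle.trans_eq (zero_add 1))⟩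
  exact ⟨hcoord 0, hcoord 1⟩

open scoped Pointwise in
lemma smul_torusSquare_one (hL : 0 < L) : L • torusSquare 1 = torusSquare L := by
  ext x
  simp [Set.mem_smul_set_iff_inv_smul_mem₀ hL.ne', torusSquare, inv_mul_le_iff₀ hL, hL]

lemma setIntegral_torusSquare_eq_integral_torusRepr {E : Type*} [NormedAddCommGroup E]
    [NormedSpace ℝ E] (hL : 0 < L) (f : ℝ × ℝ → E) :
    ∫ x in torusSquare L, f x = L ^ 2 • ∫ t, f (torusRepr L t) := by
  let cube : Set (Fin 2 → ℝ) := {y | ∀ i, y i ∈ Set.Ioc (0 : ℝ) (0 + 1)}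
  have hpre : MeasurableEquiv.finTwoArrow ⁻¹' torusSquare 1 = cube := by
    ext y
    simp [cube, torusSquare, Fin.forall_fin_two]
  have hcube : MeasurableSet cube := hpre ▸ MeasurableEquiv.finTwoArrow.measurable
    measurableSet_torusSquare
  have hrepr : ∀ y ∈ cube, torusRepr L (fun i => (y i : UnitAddCircle)) = L • (y 0, y 1) :=
    fun y hy => by
      rw [torusRepr, AddCircle.equivIoc_coe_of_mem (hy 0), AddCircle.equivIoc_coe_of_mem (hy 1)]
  calc ∫ x in torusSquare L, f x = L ^ 2 • ∫ x in torusSquare 1, f (L • x) := by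
        rw [Measure.setIntegral_comp_smul_of_pos _ _ _ hL, smul_torusSquare_one hL]
        simp [smul_smul, hL.ne']
    _ = L ^ 2 • ∫ y in cube, f (L • (y 0, y 1)) := by
        rw [← (volume_preserving_finTwoArrow ℝ).setIntegral_preimage_emb
          (MeasurableEquiv.measurableEmbedding _), hpre]
        rfl
    _ = L ^ 2 • ∫ t, f (torusRepr L t) := by
        rw [UnitAddTorus.integral_preimage _ 0]
        congr 1
        exact setIntegral_congr_fun hcube fun y hy => congrArg f (hrepr y hy).symm

lemma torusMode_torusRepr (hL : L ≠ 0) (k : ℤ × ℤ) (t : UnitAddTorus (Fin 2)) :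
    torusMode L k (torusRepr L t) = (L : ℂ)⁻¹ * UnitAddTorus.mFourier ![k.1, k.2] t := by
  have hL' : (L : ℂ) ≠ 0 := Complex.ofReal_ne_zero.2 hL
  have hfourier (n : ℤ) (i : Fin 2) : fourier n (t i)
      = Complex.exp (2 * π * Complex.I * n * (AddCircle.equivIoc (1 : ℝ) 0 (t i) : ℝ)) := by
    conv_lhs => rw [← AddCircle.coe_equivIoc (p := (1 : ℝ)) (a := 0) (y := t i)]
    rw [fourier_coe_apply, Complex.ofReal_one, div_one]
  simp only [UnitAddTorus.mFourier, ContinuousMap.coe_mk, Fin.prod_univ_two, Matrix.cons_val_zero,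
    Matrix.cons_val_one, hfourier, ← Complex.exp_add, torusMode, torusRepr, Prod.smul_mk,
    smul_eq_mul, Complex.ofReal_mul]
  congr 2
  field_simp

lemma torusCoeff_eq_mul_mFourierCoeff (hL : 0 < L) (f : ℝ × ℝ → ℂ) (k : ℤ × ℤ) :
    torusCoeff L f k = L * UnitAddTorus.mFourierCoeff (f ∘ torusRepr L) ![k.1, k.2] := by
  have hL' : (L : ℂ) ≠ 0 := Complex.ofReal_ne_zero.2 hL.ne'
  rw [torusCoeff, setIntegral_torusSquare_eq_integral_torusRepr hL, UnitAddTorus.mFourierCoeff]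
  simp only [torusMode_torusRepr hL.ne', map_mul, map_inv₀, Complex.conj_ofReal, mul_assoc,
    UnitAddTorus.mFourier_neg, integral_const_mul, Complex.real_smul, Function.comp_apply,
    smul_eq_mul]
  push_cast
  field_simp

lemma torusCoeff_torusMode (hL : 0 < L) (k l : ℤ × ℤ) :
    torusCoeff L (torusMode L l) k = if k = l then 1 else 0 := by
  have hL' : (L : ℂ) ≠ 0 := Complex.ofReal_ne_zero.2 hL.ne'
  have horth := orthonormal_iff_ite.1 (UnitAddTorus.orthonormal_mFourier (d := Fin 2))
    ![k.1, k.2] ![l.1, l.2]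
  have hkl : ![k.1, k.2] = ![l.1, l.2] ↔ k = l := by
    simp [Prod.ext_iff]
  rw [ContinuousMap.inner_toLp] at horth
  simp only [hkl] at horth
  rw [← horth, torusCoeff_eq_mul_mFourierCoeff hL, UnitAddTorus.mFourierCoeff, ← integral_const_mul]
  refine integral_congr_ae (ae_of_all _ fun t => ?_)
  simp only [UnitAddTorus.mFourier_neg, Function.comp_apply, torusMode_torusRepr hL.ne',
    smul_eq_mul]
  field_simp

theorem hasSum_sq_norm_torusCoeff (hL : 0 < L) {f : ℝ × ℝ → ℂ} (hf : Continuous f) :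
    HasSum (fun k => ‖torusCoeff L f k‖ ^ 2) (∫ x in torusSquare L, ‖f x‖ ^ 2) := by
  obtain ⟨C, hC⟩ := exists_norm_le_on_torusSquare hf L
  have hmem : MemLp (f ∘ torusRepr L) 2 :=
    .of_bound (hf.measurable.comp (measurable_torusRepr L)).aestronglyMeasurable C
      (ae_of_all _ fun t => hC _ (torusRepr_mem_torusSquare hL t))
  have hparseval := (UnitAddTorus.hasSum_sq_mFourierCoeff hmem.toLp).mul_left (L ^ 2)
  have hnorm : ∫ t, ‖hmem.toLp (f ∘ torusRepr L) t‖ ^ 2 = ∫ t, ‖f (torusRepr L t)‖ ^ 2 :=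
    integral_congr_ae (hmem.coeFn_toLp.mono fun t ht => by simp only [ht, Function.comp_apply])
  have hcoeff (n) : UnitAddTorus.mFourierCoeff (hmem.toLp (f ∘ torusRepr L)) n
      = UnitAddTorus.mFourierCoeff (f ∘ torusRepr L) n :=
    integral_congr_ae (hmem.coeFn_toLp.mono fun t ht => by simp only [ht])
  rw [hnorm, ← (finTwoArrowEquiv ℤ).symm.hasSum_iff] at hparseval
  rw [setIntegral_torusSquare_eq_integral_torusRepr hL]
  refine hparseval.congr_fun fun k => ?_
  rw [Function.comp_apply, hcoeff, torusCoeff_eq_mul_mFourierCoeff hL, norm_mul, mul_pow,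
    Complex.norm_of_nonneg hL.le]
  rfl

end Parseval

section Divergence

variable {L : ℝ}

lemma continuous_divergence {E : Type*} [NormedAddCommGroup E] [NormedSpace ℝ E]
    {f g : ℝ × ℝ → E} (hf : ContDiff ℝ 1 f) (hg : ContDiff ℝ 1 g) :
    Continuous fun x => fderiv ℝ f x (1, 0) + fderiv ℝ g x (0, 1) :=
  ((hf.continuous_fderiv one_ne_zero).clm_apply continuous_const).add
    ((hg.continuous_fderiv one_ne_zero).clm_apply continuous_const)

lemma setIntegral_torusSquare_divergence {E : Type*} [NormedAddCommGroup E] [NormedSpace ℝ E]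
    (hL : 0 ≤ L) {f g : ℝ × ℝ → E} (hf : ContDiff ℝ 1 f) (hg : ContDiff ℝ 1 g)
    (hf_per : ∀ y, f (L, y) = f (0, y)) (hg_per : ∀ x, g (x, L) = g (x, 0)) :
    ∫ x in torusSquare L, (fderiv ℝ f x (1, 0) + fderiv ℝ g x (0, 1)) = 0 := by
  have hsquare : torusSquare L =ᵐ[volume] Set.Icc ((0 : ℝ), (0 : ℝ)) (L, L) := by
    rw [← Set.Icc_prod_Icc, Measure.volume_eq_prod]
    exact Measure.set_prod_ae_eq Ioc_ae_eq_Icc Ioc_ae_eq_Icc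
  rw [setIntegral_congr_set hsquare, integral_divergence_prod_Icc_of_hasFDerivAt_of_le f g
    (fderiv ℝ f) (fderiv ℝ g) _ _ ⟨hL, hL⟩ hf.continuous.continuousOn hg.continuous.continuousOn
    (fun x _ => (hf.differentiable one_ne_zero x).hasFDerivAt)
    (fun x _ => (hg.differentiable one_ne_zero x).hasFDerivAt)
    ((continuous_divergence hf hg).continuousOn.integrableOn_compact isCompact_Icc)]
  simp only [hf_per, hg_per, sub_self, zero_add]

lemma fderiv_conj_torusMode_mul_apply {f : ℝ × ℝ → ℂ} {x : ℝ × ℝ} (hf : DifferentiableAt ℝ f x)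
    (k : ℤ × ℤ) (u : ℝ × ℝ) :
    fderiv ℝ (fun y => conj (torusMode L k y) * f y) x u
      = conj (torusMode L k x) * fderiv ℝ f x u
        - 2 * π * Complex.I / L * (k.1 * u.1 + k.2 * u.2) * (conj (torusMode L k x) * f x) := by
  simp only [conj_torusMode]
  rw [fderiv_fun_mul ((contDiff_torusMode L (-k)).differentiable one_ne_zero x) hf]
  simp only [add_apply, smul_apply, smul_eq_mul, fderiv_torusMode_apply, Prod.fst_neg,
    Prod.snd_neg, Int.cast_neg]
  ring

theorem torusCoeff_divergence (hL : 0 < L) {f g : ℝ × ℝ → ℂ} (hf : ContDiff ℝ 1 f)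
    (hg : ContDiff ℝ 1 g) (hf_per : ∀ y, f (L, y) = f (0, y)) (hg_per : ∀ x, g (x, L) = g (x, 0))
    (k : ℤ × ℤ) :
    torusCoeff L (fun x => fderiv ℝ f x (1, 0) + fderiv ℝ g x (0, 1)) k
      = 2 * π * Complex.I / L * (k.1 * torusCoeff L f k + k.2 * torusCoeff L g k) := by
  have hmode : ContDiff ℝ 1 fun x => conj (torusMode L k x) := by
    simpa only [conj_torusMode] using contDiff_torusMode L (-k)
  have hzero := setIntegral_torusSquare_divergence hL.le (hmode.mul hf) (hmode.mul hg)
    (fun y => by rw [torusMode_right_edge hL.ne', hf_per])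
    (fun x => by rw [torusMode_top_edge hL.ne', hg_per])
  simp only [fderiv_conj_torusMode_mul_apply (hf.differentiable one_ne_zero _),
    fderiv_conj_torusMode_mul_apply (hg.differentiable one_ne_zero _)] at hzero
  have hint {h : ℝ × ℝ → ℂ} (hh : Continuous h) (c : ℂ) :
      IntegrableOn (fun x => c * (conj (torusMode L k x) * h x)) (torusSquare L) :=
    integrableOn_torusSquare (continuous_const.mul (hmode.continuous.mul hh))
  have hdiv := integrableOn_torusSquare (L := L)
    (hmode.continuous.fun_mul (continuous_divergence hf hg))
  rw [← sub_eq_zero, ← hzero, mul_add, ← mul_assoc, ← mul_assoc]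
  simp only [torusCoeff, ← integral_const_mul]
  rw [← integral_add (hint hf.continuous _) (hint hg.continuous _),
    ← integral_sub hdiv (Integrable.fun_add (hint hf.continuous _) (hint hg.continuous _))]
  refine integral_congr_ae (ae_of_all _ fun x => ?_)
  push_cast
  ring

end Divergence

section LatticeCount

/-- The squared length of a frequency, as a natural number so that it can grade the modes. -/
def freqSq (k : ℤ × ℤ) : ℕ := k.1.natAbs ^ 2 + k.2.natAbs ^ 2

/-- The nonzero frequencies in the closed disc of radius `√n`, cut out of a square containing it. -/
noncomputable def latticeDisc (n : ℕ) : Finset {k : ℤ × ℤ // k ≠ 0} :=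
  ((Finset.Icc (-n.sqrt : ℤ) n.sqrt ×ˢ Finset.Icc (-n.sqrt : ℤ) n.sqrt).filter
    (freqSq · ≤ n)).subtype (· ≠ 0)

lemma cast_freqSq (k : ℤ × ℤ) : (freqSq k : ℝ) = (k.1 : ℝ) ^ 2 + (k.2 : ℝ) ^ 2 := by
  simp only [freqSq, Nat.cast_add, Nat.cast_pow, Nat.cast_natAbs, Int.cast_abs, sq_abs]

lemma freqSq_pos {k : ℤ × ℤ} (hk : k ≠ 0) : 0 < freqSq k := by
  rw [freqSq, Nat.pos_iff_ne_zero]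
  contrapose! hk
  simpa [Prod.ext_iff] using hk

lemma mem_latticeDisc (n : ℕ) (k : {k : ℤ × ℤ // k ≠ 0}) :
    k ∈ latticeDisc n ↔ freqSq k ≤ n := by
  have hcoord {a : ℤ} (ha : a.natAbs ^ 2 ≤ n) : a ∈ Finset.Icc (-n.sqrt : ℤ) n.sqrt := by
    have := Nat.le_sqrt'.2 ha
    rw [Finset.mem_Icc]
    lia
  simp only [latticeDisc, Finset.mem_subtype, Finset.mem_filter, Finset.mem_product,
    and_iff_right_iff_imp]
  exact fun h => ⟨hcoord (le_of_add_le_left h), hcoord (le_of_add_le_right h)⟩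

lemma card_latticeDisc_le (n : ℕ) : (latticeDisc n).card ≤ 8 * n := by
  let B := Finset.Icc (-n.sqrt : ℤ) n.sqrt
  have hB : B.card = 2 * n.sqrt + 1 := by
    simp only [B, Int.card_Icc]
    lia
  have hsub : (latticeDisc n).map (.subtype _) ⊆ (B ×ˢ B).erase 0 := by
    intro k hk
    obtain ⟨l, hl, rfl⟩ := Finset.mem_map.1 hk
    exact Finset.mem_erase.2 ⟨l.2, (Finset.mem_filter.1 (Finset.mem_subtype.1 hl)).1⟩
  have hzero : (0 : ℤ × ℤ) ∈ B ×ˢ B := by simp [B]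
  calc (latticeDisc n).card ≤ ((B ×ˢ B).erase 0).card := by
        rw [← Finset.card_map]
        exact Finset.card_le_card hsub
    _ = (2 * n.sqrt + 1) * (2 * n.sqrt + 1) - 1 := by
        rw [Finset.card_erase_of_mem hzero, Finset.card_product, hB]
    _ = 4 * n.sqrt ^ 2 + 4 * n.sqrt := by rw [Nat.sub_eq_of_eq_add]; ring
    _ ≤ 8 * n := by linarith [Nat.sqrt_le' n, Nat.le_self_pow two_ne_zero n.sqrt]

end LatticeCount

section VectorCoefficients

/-- The Fourier coefficient of a vector-valued function, taken coordinatewise. -/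
noncomputable def vectorCoeff {ι : Type*} (L : ℝ) (F : ℝ × ℝ → EuclideanSpace ℂ ι) (k : ℤ × ℤ) :
    EuclideanSpace ℂ ι :=
  WithLp.toLp 2 fun i => torusCoeff L (fun x => F x i) k

lemma vectorCoeff_torusMode_smul {ι : Type*} {L : ℝ} (hL : 0 < L) (k l : ℤ × ℤ)
    (w : EuclideanSpace ℂ ι) :
    vectorCoeff L (fun x => torusMode L l x • w) k = if k = l then w else 0 := by
  ext i
  have hcoord : torusCoeff L (fun x => torusMode L l x * w i) k
      = torusCoeff L (torusMode L l) k * w i := by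
    simp only [torusCoeff, ← integral_mul_const, mul_assoc]
  simp only [vectorCoeff, PiLp.smul_apply, smul_eq_mul, hcoord, torusCoeff_torusMode hL]
  split_ifs <;> simp

variable {ι : Type*} [Fintype ι] {L : ℝ} {F : ℝ × ℝ → EuclideanSpace ℂ ι}

theorem hasSum_sq_norm_vectorCoeff (hL : 0 < L) (hF : Continuous F) :
    HasSum (fun k => ‖vectorCoeff L F k‖ ^ 2) (∫ x in torusSquare L, ‖F x‖ ^ 2) := by
  simp only [EuclideanSpace.norm_sq_eq]
  rw [integral_finsetSum _ fun i _ => integrableOn_torusSquare (by fun_prop)]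
  exact hasSum_sum fun i _ => hasSum_sq_norm_torusCoeff hL (by fun_prop)

lemma setIntegral_inner_torusMode_smul (hF : Continuous F) (k : ℤ × ℤ) (w : EuclideanSpace ℂ ι) :
    ∫ x in torusSquare L, ⟪torusMode L k x • w, F x⟫_ℂ = ⟪w, vectorCoeff L F k⟫_ℂ := by
  have hmode := continuous_torusMode L k
  simp only [inner_smul_left, PiLp.inner_apply, Finset.mul_sum, vectorCoeff, RCLike.inner_apply,
    torusCoeff]
  rw [integral_finsetSum _ fun i _ => integrableOn_torusSquare (by fun_prop)]
  refine Finset.sum_congr rfl fun i _ => ?_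
  simp only [← integral_mul_const, mul_assoc]

end VectorCoefficients

section SquareL2

lemma inner_memLp_toLp {X 𝕜 E : Type*} [MeasurableSpace X] {μ : Measure X} [RCLike 𝕜]
    [NormedAddCommGroup E] [InnerProductSpace 𝕜 E] {f g : X → E} (hf : MemLp f 2 μ)
    (hg : MemLp g 2 μ) : ⟪hf.toLp f, hg.toLp g⟫_𝕜 = ∫ x, ⟪f x, g x⟫_𝕜 ∂μ := by
  rw [L2.inner_def]
  refine integral_congr_ae ?_
  filter_upwards [hf.coeFn_toLp, hg.coeFn_toLp] with x hfx hgx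
  rw [hfx, hgx]

lemma memLp_torusSquare {E : Type*} [NormedAddCommGroup E] {f : ℝ × ℝ → E} (hf : Continuous f)
    (L : ℝ) : MemLp f 2 (volume.restrict (torusSquare L)) :=
  (memLp_two_iff_integrable_sq_norm (integrableOn_torusSquare hf).aestronglyMeasurable).2
    (integrableOn_torusSquare (hf.norm.pow 2))

end SquareL2

section SolenoidalModes

/-- The unit vector orthogonal to the frequency `k`, i.e. the only direction in which a
divergence-free field can oscillate at that frequency; `0⁻¹ = 0` makes it zero at `k = 0`. -/
noncomputable def polarization (k : ℤ × ℤ) : EuclideanSpace ℂ (Fin 2) :=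
  ((√(freqSq k))⁻¹ : ℂ) • !₂[-(k.2 : ℂ), (k.1 : ℂ)]

/-- The divergence-free vector Fourier mode of frequency `k`. -/
noncomputable def solenoidalMode (L : ℝ) (k : ℤ × ℤ) (x : ℝ × ℝ) : EuclideanSpace ℂ (Fin 2) :=
  torusMode L k x • polarization k

variable {L : ℝ} {k : ℤ × ℤ}

lemma inner_polarization (k : ℤ × ℤ) (a : EuclideanSpace ℂ (Fin 2)) :
    ⟪polarization k, a⟫_ℂ = ((√(freqSq k))⁻¹ : ℂ) * (k.1 * a 1 - k.2 * a 0) := by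
  simp only [polarization, CStarModule.inner_op_smul_left, PiLp.inner_apply, RCLike.inner_apply,
    Fin.sum_univ_two, Fin.isValue, Matrix.cons_val_zero, map_neg, map_intCast, mul_neg,
    Matrix.cons_val_one, Matrix.cons_val_fin_one, star_inv₀, RCLike.star_def, Complex.conj_ofReal]
  ring

lemma norm_inner_polarization_sq (hk : k ≠ 0) {a : EuclideanSpace ℂ (Fin 2)}
    (ha : k.1 * a 0 + k.2 * a 1 = 0) : ‖⟪polarization k, a⟫_ℂ‖ ^ 2 = ‖a‖ ^ 2 := by
  have hpos : (0 : ℝ) < freqSq k := by exact_mod_cast freqSq_pos hk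
  have hlagrange : ‖(k.1 * a 1 - k.2 * a 0 : ℂ)‖ ^ 2 + ‖(k.1 * a 0 + k.2 * a 1 : ℂ)‖ ^ 2
      = freqSq k * ‖a‖ ^ 2 := by
    simp only [EuclideanSpace.norm_sq_eq, Fin.sum_univ_two, Complex.sq_norm, Complex.normSq_apply,
      cast_freqSq, Complex.sub_re, Complex.sub_im, Complex.add_re, Complex.add_im, Complex.mul_re,
      Complex.mul_im, Complex.intCast_re, Complex.intCast_im]
    ring
  rw [ha, norm_zero, zero_pow two_ne_zero, add_zero] at hlagrange
  rw [inner_polarization, norm_mul, mul_pow, hlagrange, norm_inv,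
    Complex.norm_of_nonneg (Real.sqrt_nonneg _), inv_pow, Real.sq_sqrt hpos.le,
    inv_mul_cancel_left₀ hpos.ne']

lemma norm_polarization (hk : k ≠ 0) : ‖polarization k‖ = 1 := by
  have hpos : (0 : ℝ) < freqSq k := by exact_mod_cast freqSq_pos hk
  have hnorm : ‖(!₂[-(k.2 : ℂ), (k.1 : ℂ)] : EuclideanSpace ℂ (Fin 2))‖ = √(freqSq k) := by
    simp [EuclideanSpace.norm_eq, cast_freqSq, add_comm]
  rw [polarization, norm_smul, hnorm, norm_inv, Complex.norm_of_nonneg (Real.sqrt_nonneg _),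
    inv_mul_cancel₀ (Real.sqrt_pos.2 hpos).ne']

lemma continuous_solenoidalMode (L : ℝ) (k : ℤ × ℤ) : Continuous (solenoidalMode L k) :=
  (continuous_torusMode L k).smul continuous_const

lemma norm_solenoidalMode_sq (hL : 0 ≤ L) (hk : k ≠ 0) (x : ℝ × ℝ) :
    ‖solenoidalMode L k x‖ ^ 2 = (L ^ 2)⁻¹ := by
  rw [solenoidalMode, norm_smul, norm_torusMode hL, norm_polarization hk, mul_one, inv_pow]

lemma setIntegral_inner_solenoidalMode (hL : 0 < L) (hk : k ≠ 0) (l : ℤ × ℤ) :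
    ∫ x in torusSquare L, ⟪solenoidalMode L k x, solenoidalMode L l x⟫_ℂ
      = if k = l then 1 else 0 := by
  have hcoeff : vectorCoeff L (solenoidalMode L l) k = if k = l then polarization l else 0 :=
    vectorCoeff_torusMode_smul hL k l (polarization l)
  refine (setIntegral_inner_torusMode_smul (continuous_solenoidalMode L l) k _).trans ?_
  rw [hcoeff]
  split_ifs with h
  · rw [← h, inner_self_eq_norm_sq_to_K, norm_polarization hk]
    simp
  · exact inner_zero_right _

/-- The divergence-free modes as vectors of `L²(torusSquare L)`, indexed by nonzero frequencies. -/
noncomputable def solenoidalModeLp (L : ℝ) (k : {k : ℤ × ℤ // k ≠ 0}) :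
    Lp (EuclideanSpace ℂ (Fin 2)) 2 (volume.restrict (torusSquare L)) :=
  (memLp_torusSquare (continuous_solenoidalMode L k) L).toLp

lemma orthonormal_solenoidalModeLp (hL : 0 < L) : Orthonormal ℂ (solenoidalModeLp L) := by
  rw [orthonormal_iff_ite]
  intro k l
  simp only [solenoidalModeLp, inner_memLp_toLp, setIntegral_inner_solenoidalMode hL k.2,
    Subtype.ext_iff]

lemma ae_sum_norm_solenoidalModeLp_sq_le (hL : 0 ≤ L) (n : ℕ) :
    ∀ᵐ x ∂volume.restrict (torusSquare L),
      ∑ k ∈ latticeDisc n, ‖solenoidalModeLp L k x‖ ^ 2 ≤ 8 / L ^ 2 * n := by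
  have hmode : ∀ᵐ x ∂volume.restrict (torusSquare L), ∀ k,
      solenoidalModeLp L k x = solenoidalMode L k x := ae_all_iff.2 fun k => MemLp.coeFn_toLp _
  filter_upwards [hmode] with x hx
  calc ∑ k ∈ latticeDisc n, ‖solenoidalModeLp L k x‖ ^ 2
      = (latticeDisc n).card * (L ^ 2)⁻¹ := by
        rw [Finset.sum_congr rfl fun k _ => by rw [hx, norm_solenoidalMode_sq hL k.2],
          Finset.sum_const, nsmul_eq_mul]
    _ ≤ (8 * n : ℕ) * (L ^ 2)⁻¹ := by gcongr; exact card_latticeDisc_le n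
    _ = 8 / L ^ 2 * n := by push_cast; ring

end SolenoidalModes

section SolenoidalFields

variable {L : ℝ} {F : ℝ × ℝ → EuclideanSpace ℂ (Fin 2)}

lemma hasSum_mul_sq_norm_inner_solenoidalModeLp (hF : Continuous F)
    (hdiv : ∀ k : ℤ × ℤ, k.1 * vectorCoeff L F k 0 + k.2 * vectorCoeff L F k 1 = 0)
    (hmean : vectorCoeff L F 0 = 0) {w : ℤ × ℤ → ℝ} {e : ℝ}
    (he : HasSum (fun k => w k * ‖vectorCoeff L F k‖ ^ 2) e) :
    HasSum (fun k : {k : ℤ × ℤ // k ≠ 0} =>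
      w k * ‖⟪solenoidalModeLp L k, (memLp_torusSquare hF L).toLp⟫_ℂ‖ ^ 2) e := by
  have hsupport : Function.support (fun k => w k * ‖vectorCoeff L F k‖ ^ 2) ⊆ {k | k ≠ 0} := by
    rintro k hk rfl
    simp [hmean] at hk
  refine ((hasSum_subtype_iff_of_support_subset hsupport).2 he).congr_fun fun k => ?_
  have hcoeff : ⟪solenoidalModeLp L k, (memLp_torusSquare hF L).toLp⟫_ℂ
      = ⟪polarization k, vectorCoeff L F k⟫_ℂ :=
    (inner_memLp_toLp _ _).trans (setIntegral_inner_torusMode_smul hF _ _)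
  simp only [hcoeff, norm_inner_polarization_sq k.2 (hdiv k), Function.comp_apply]

lemma hasSum_sq_norm_inner_solenoidalModeLp (hL : 0 < L) (hF : Continuous F)
    (hdiv : ∀ k : ℤ × ℤ, k.1 * vectorCoeff L F k 0 + k.2 * vectorCoeff L F k 1 = 0)
    (hmean : vectorCoeff L F 0 = 0) :
    HasSum (fun k => ‖⟪solenoidalModeLp L k, (memLp_torusSquare hF L).toLp⟫_ℂ‖ ^ 2)
      (‖(memLp_torusSquare hF L).toLp‖ ^ 2) := by
  have hnorm : ‖(memLp_torusSquare hF L).toLp‖ ^ 2 = ∫ x in torusSquare L, ‖F x‖ ^ 2 := by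
    rw [← integral_norm_sq_eq_norm_sq ℂ]
    exact integral_congr_ae
      ((memLp_torusSquare hF L).coeFn_toLp.mono fun x hx => by simp only [hx])
  have hparseval : HasSum (fun k => 1 * ‖vectorCoeff L F k‖ ^ 2)
      (∫ x in torusSquare L, ‖F x‖ ^ 2) := by
    simpa only [one_mul] using hasSum_sq_norm_vectorCoeff hL hF
  simpa only [hnorm, one_mul] using
    hasSum_mul_sq_norm_inner_solenoidalModeLp hF hdiv hmean hparseval

theorem setIntegral_sq_sum_norm_sq_le_of_solenoidal {J : Type*} [Fintype J] [DecidableEq J]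
    (hL : 0 < L) {F : J → ℝ × ℝ → EuclideanSpace ℂ (Fin 2)} (hF : ∀ j, Continuous (F j))
    (hdiv : ∀ j (k : ℤ × ℤ), k.1 * vectorCoeff L (F j) k 0 + k.2 * vectorCoeff L (F j) k 1 = 0)
    (hmean : ∀ j, vectorCoeff L (F j) 0 = 0)
    (hortho : ∀ i j, ∫ x in torusSquare L, ⟪F i x, F j x⟫_ℂ = if i = j then 1 else 0)
    {e : J → ℝ} (he : ∀ j, HasSum (fun k => freqSq k * ‖vectorCoeff L (F j) k‖ ^ 2) (e j)) :
    ∫ x in torusSquare L, (∑ j, ‖F j x‖ ^ 2) ^ 2 ≤ 48 / L ^ 2 * ∑ j, e j := by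
  let μ := volume.restrict (torusSquare L)
  let v (j) : Lp (EuclideanSpace ℂ (Fin 2)) 2 μ := (memLp_torusSquare (hF j) L).toLp
  have hv : Orthonormal ℂ v := by
    rw [orthonormal_iff_ite]
    intro i j
    simp only [v, inner_memLp_toLp, μ, hortho]
  have hv_ae : ∀ᵐ x ∂μ, ∀ j, v j x = F j x := ae_all_iff.2 fun j => MemLp.coeFn_toLp _
  obtain ⟨C, hC⟩ := exists_norm_le_on_torusSquare (f := fun x => ∑ j, ‖F j x‖ ^ 2)
    (by fun_prop) L
  have hbound : ∀ᵐ x ∂μ, ∑ j, ‖v j x‖ ^ 2 ≤ C := by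
    filter_upwards [hv_ae, ae_restrict_mem measurableSet_torusSquare] with x hx hxL
    simpa only [hx] using (le_abs_self _).trans (hC x hxL)
  calc ∫ x in torusSquare L, (∑ j, ‖F j x‖ ^ 2) ^ 2
      = ∫ x, (∑ j, ‖v j x‖ ^ 2) ^ 2 ∂μ :=
        integral_congr_ae (hv_ae.mono fun x hx => by simp only [hx])
    _ ≤ 6 * (8 / L ^ 2) * ∑ j, e j :=
        integral_sq_sum_norm_sq_le_of_orthonormal (orthonormal_solenoidalModeLp hL) hv
          mem_latticeDisc (by positivity) (ae_sum_norm_solenoidalModeLp_sq_le hL.le) hbound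
          (fun j => hasSum_sq_norm_inner_solenoidalModeLp hL (hF j) (hdiv j) (hmean j))
          fun j => hasSum_mul_sq_norm_inner_solenoidalModeLp (hF j) (hdiv j) (hmean j) (he j)
    _ = 48 / L ^ 2 * ∑ j, e j := by ring

end SolenoidalFields

section Energy

variable {L : ℝ}

lemma torusCoeff_zero (k : ℤ × ℤ) : torusCoeff L 0 k = 0 := by
  simp [torusCoeff]

theorem hasSum_freqSq_mul_sq_norm_torusCoeff (hL : 0 < L) {f : ℝ × ℝ → ℂ} (hf : ContDiff ℝ 1 f)
    (hf_right : ∀ y, f (L, y) = f (0, y)) (hf_top : ∀ x, f (x, L) = f (x, 0)) :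
    HasSum (fun k => freqSq k * ‖torusCoeff L f k‖ ^ 2) (L ^ 2 / (4 * π ^ 2) *
      ∫ x in torusSquare L, (‖fderiv ℝ f x (1, 0)‖ ^ 2 + ‖fderiv ℝ f x (0, 1)‖ ^ 2)) := by
  have hcont (u : ℝ × ℝ) : Continuous fun x => fderiv ℝ f x u :=
    (hf.continuous_fderiv one_ne_zero).clm_apply continuous_const
  have hint (u : ℝ × ℝ) : IntegrableOn (fun x => ‖fderiv ℝ f x u‖ ^ 2) (torusSquare L) :=
    integrableOn_torusSquare ((hcont u).norm.pow 2)
  have hcoeff₁ (k : ℤ × ℤ) : torusCoeff L (fun x => fderiv ℝ f x (1, 0)) k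
      = 2 * π * Complex.I / L * (k.1 * torusCoeff L f k) := by
    simpa [torusCoeff_zero] using
      torusCoeff_divergence (g := 0) hL hf contDiff_const hf_right (fun _ => rfl) k
  have hcoeff₂ (k : ℤ × ℤ) : torusCoeff L (fun x => fderiv ℝ f x (0, 1)) k
      = 2 * π * Complex.I / L * (k.2 * torusCoeff L f k) := by
    simpa [torusCoeff_zero] using
      torusCoeff_divergence (f := 0) hL contDiff_const hf (fun _ => rfl) hf_top k
  rw [integral_add (hint _) (hint _)]
  refine (((hasSum_sq_norm_torusCoeff hL (hcont (1, 0))).add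
    (hasSum_sq_norm_torusCoeff hL (hcont (0, 1)))).mul_left _).congr_fun fun k => ?_
  simp only [hcoeff₁, hcoeff₂, norm_mul, norm_div, mul_pow, div_pow, Complex.norm_I,
    Complex.norm_real, Complex.norm_intCast, Real.norm_eq_abs, sq_abs, cast_freqSq,
    Complex.norm_ofNat]
  field_simp
  ring

theorem hasSum_freqSq_mul_sq_norm_vectorCoeff {ι : Type*} [Fintype ι] (hL : 0 < L)
    {F : ℝ × ℝ → EuclideanSpace ℂ ι} (hF : ∀ i, ContDiff ℝ 1 fun x => F x i)
    (hF_right : ∀ y, F (L, y) = F (0, y)) (hF_top : ∀ x, F (x, L) = F (x, 0)) :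
    HasSum (fun k => freqSq k * ‖vectorCoeff L F k‖ ^ 2) (L ^ 2 / (4 * π ^ 2) *
      ∫ x in torusSquare L, ∑ i, (‖fderiv ℝ (fun y => F y i) x (1, 0)‖ ^ 2
        + ‖fderiv ℝ (fun y => F y i) x (0, 1)‖ ^ 2)) := by
  have hcont (i) (u : ℝ × ℝ) : Continuous fun x => ‖fderiv ℝ (fun y => F y i) x u‖ ^ 2 :=
    (((hF i).continuous_fderiv one_ne_zero).clm_apply continuous_const).norm.pow 2
  rw [integral_finsetSum _ fun i _ => integrableOn_torusSquare ((hcont i _).fun_add (hcont i _))]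
  simp only [EuclideanSpace.norm_sq_eq, Finset.mul_sum]
  exact hasSum_sum fun i _ => hasSum_freqSq_mul_sq_norm_torusCoeff hL (hF i)
    (fun y => by rw [hF_right]) fun x => by rw [hF_top]

end Energy

section RealFields

/-- A real vector field on the plane as a complex one, in the Euclidean rather than the product
norm. -/
noncomputable def complexField (v : ℝ × ℝ → ℝ × ℝ) (x : ℝ × ℝ) : EuclideanSpace ℂ (Fin 2) :=
  !₂[((v x).1 : ℂ), ((v x).2 : ℂ)]

lemma fderiv_ofReal_apply_fst {f : ℝ × ℝ → ℝ} {x : ℝ × ℝ} (hf : DifferentiableAt ℝ f x) :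
    fderiv ℝ (fun y => (f y : ℂ)) x (1, 0) = pd1 f x := by
  have hline : HasDerivAt (fun s => (s, x.2)) ((1 : ℝ), (0 : ℝ)) x.1 :=
    (hasDerivAt_id x.1).prodMk (hasDerivAt_const x.1 x.2)
  have hpd : pd1 f x = _ := (hf.hasFDerivAt.comp_hasDerivAt x.1 hline).deriv
  rw [hpd]
  exact DFunLike.congr_fun (Complex.ofRealCLM.hasFDerivAt.comp x hf.hasFDerivAt).fderiv _

lemma fderiv_ofReal_apply_snd {f : ℝ × ℝ → ℝ} {x : ℝ × ℝ} (hf : DifferentiableAt ℝ f x) :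
    fderiv ℝ (fun y => (f y : ℂ)) x (0, 1) = pd2 f x := by
  have hline : HasDerivAt (fun t => (x.1, t)) ((0 : ℝ), (1 : ℝ)) x.2 :=
    (hasDerivAt_const x.2 x.1).prodMk (hasDerivAt_id x.2)
  have hpd : pd2 f x = _ := (hf.hasFDerivAt.comp_hasDerivAt x.2 hline).deriv
  rw [hpd]
  exact DFunLike.congr_fun (Complex.ofRealCLM.hasFDerivAt.comp x hf.hasFDerivAt).fderiv _

lemma gradSq_nonneg (v : ℝ × ℝ → ℝ × ℝ) (x : ℝ × ℝ) : 0 ≤ gradSq v x := by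
  unfold gradSq
  positivity

lemma norm_complexField_sq (v : ℝ × ℝ → ℝ × ℝ) (x : ℝ × ℝ) :
    ‖complexField v x‖ ^ 2 = (v x).1 ^ 2 + (v x).2 ^ 2 := by
  simp [complexField, EuclideanSpace.norm_sq_eq]

lemma inner_complexField (v w : ℝ × ℝ → ℝ × ℝ) (x : ℝ × ℝ) :
    ⟪complexField v x, complexField w x⟫_ℂ
      = ((v x).1 * (w x).1 + (v x).2 * (w x).2 : ℝ) := by
  simp [complexField, PiLp.inner_apply, mul_comm]

variable {L : ℝ} {v : ℝ × ℝ → ℝ × ℝ}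

lemma contDiff_complexField_apply (hv : ContDiff ℝ 1 v) (i : Fin 2) :
    ContDiff ℝ 1 fun x => complexField v x i := by
  fin_cases i
  exacts [Complex.ofRealCLM.contDiff.comp hv.fst, Complex.ofRealCLM.contDiff.comp hv.snd]

lemma continuous_complexField (hv : Continuous v) : Continuous (complexField v) := by
  unfold complexField
  fun_prop

lemma sum_norm_fderiv_complexField_sq (hv : Differentiable ℝ v) (x : ℝ × ℝ) :
    ∑ i, (‖fderiv ℝ (fun y => complexField v y i) x (1, 0)‖ ^ 2
      + ‖fderiv ℝ (fun y => complexField v y i) x (0, 1)‖ ^ 2) = gradSq v x := by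
  simp [complexField, Fin.sum_univ_two, gradSq, fderiv_ofReal_apply_fst, fderiv_ofReal_apply_snd,
    hv.fst x, hv.snd x, add_assoc]

lemma vectorCoeff_complexField_zero_eq_zero (hv : Continuous v)
    (hmean : ∫ x in torusSquare L, v x = 0) : vectorCoeff L (complexField v) 0 = 0 := by
  have hfst : ∫ x in torusSquare L, (v x).1 = 0 := by
    rw [← fst_integral (integrableOn_torusSquare hv), hmean, Prod.fst_zero]
  have hsnd : ∫ x in torusSquare L, (v x).2 = 0 := by
    rw [← snd_integral (integrableOn_torusSquare hv), hmean, Prod.snd_zero]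
  have hmode (x : ℝ × ℝ) : torusMode L 0 x = (L : ℂ)⁻¹ := by simp [torusMode]
  ext i
  fin_cases i <;>
    simp [vectorCoeff, torusCoeff, complexField, hmode, integral_const_mul, hfst, hsnd,
      integral_complex_ofReal]

lemma freq_dot_vectorCoeff_complexField_eq_zero (hL : 0 < L) (hv : ContDiff ℝ 1 v)
    (hv_right : ∀ y, v (L, y) = v (0, y)) (hv_top : ∀ x, v (x, L) = v (x, 0))
    (hdiv : ∀ x, pd1 (fun y => (v y).1) x + pd2 (fun y => (v y).2) x = 0) (k : ℤ × ℤ) :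
    k.1 * vectorCoeff L (complexField v) k 0 + k.2 * vectorCoeff L (complexField v) k 1 = 0 := by
  have hfst := hv.fst.differentiable one_ne_zero
  have hsnd := hv.snd.differentiable one_ne_zero
  have hdiv_complex : (fun x => fderiv ℝ (fun y => complexField v y 0) x (1, 0)
      + fderiv ℝ (fun y => complexField v y 1) x (0, 1)) = 0 := by
    funext x
    have h := congrArg Complex.ofReal (hdiv x)
    rw [Complex.ofReal_add, ← fderiv_ofReal_apply_fst (hfst x),
      ← fderiv_ofReal_apply_snd (hsnd x)] at h
    exact h
  have hcoeff := torusCoeff_divergence hL (contDiff_complexField_apply hv 0)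
    (contDiff_complexField_apply hv 1) (fun y => by simp only [complexField, hv_right])
    (fun x => by simp only [complexField, hv_top]) k
  rw [hdiv_complex, torusCoeff_zero] at hcoeff
  have hne : (2 * π * Complex.I / L : ℂ) ≠ 0 := by
    simp [Real.pi_ne_zero, hL.ne']
  exact (mul_eq_zero.1 hcoeff.symm).resolve_left hne

lemma hasSum_freqSq_mul_sq_norm_vectorCoeff_complexField (hL : 0 < L) (hv : ContDiff ℝ 1 v)
    (hv_right : ∀ y, v (L, y) = v (0, y)) (hv_top : ∀ x, v (x, L) = v (x, 0)) :
    HasSum (fun k => freqSq k * ‖vectorCoeff L (complexField v) k‖ ^ 2)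
      (L ^ 2 / (4 * π ^ 2) * ∫ x in torusSquare L, gradSq v x) := by
  simp only [← sum_norm_fderiv_complexField_sq (hv.differentiable one_ne_zero)]
  exact hasSum_freqSq_mul_sq_norm_vectorCoeff hL (contDiff_complexField_apply hv)
    (fun y => by simp only [complexField, hv_right]) fun x => by simp only [complexField, hv_top]

end RealFields

theorem stmt_17_general {J : Type*} [Fintype J] [DecidableEq J] {L : ℝ} (hL : 0 < L)
    {v : J → ℝ × ℝ → ℝ × ℝ} (hC1 : ∀ j, ContDiff ℝ 1 (v j))
    (hper1 : ∀ j (x : ℝ × ℝ), v j (x.1 + L, x.2) = v j x)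
    (hper2 : ∀ j (x : ℝ × ℝ), v j (x.1, x.2 + L) = v j x)
    (hmean : ∀ j, ∫ x in torusSquare L, v j x = 0)
    (hdiv : ∀ j x, pd1 (fun y => (v j y).1) x + pd2 (fun y => (v j y).2) x = 0)
    (hortho : ∀ i j, ∫ x in torusSquare L, ((v i x).1 * (v j x).1 + (v i x).2 * (v j x).2)
      = if i = j then 1 else 0) :
    ∫ x in torusSquare L, (∑ j, ((v j x).1 ^ 2 + (v j x).2 ^ 2)) ^ 2
      ≤ 12 / π ^ 2 * ∑ j, ∫ x in torusSquare L, gradSq (v j) x := by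
  have hright (j y) : v j (L, y) = v j (0, y) := by simpa using hper1 j (0, y)
  have htop (j x) : v j (x, L) = v j (x, 0) := by simpa using hper2 j (x, 0)
  have hortho_complex (i j) :
      ∫ x in torusSquare L, ⟪complexField (v i) x, complexField (v j) x⟫_ℂ
        = if i = j then 1 else 0 := by
    simp only [inner_complexField, integral_complex_ofReal, hortho]
    split_ifs <;> simp
  have hbound := setIntegral_sq_sum_norm_sq_le_of_solenoidal hL
    (fun j => continuous_complexField (hC1 j).continuous)
    (fun j => freq_dot_vectorCoeff_complexField_eq_zero hL (hC1 j) (hright j) (htop j) (hdiv j))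
    (fun j => vectorCoeff_complexField_zero_eq_zero (hC1 j).continuous (hmean j)) hortho_complex
    (fun j => hasSum_freqSq_mul_sq_norm_vectorCoeff_complexField hL (hC1 j) (hright j) (htop j))
  simp only [norm_complexField_sq, ← Finset.mul_sum, ← mul_assoc] at hbound
  convert! hbound using 2
  field_simp
  norm_num

theorem stmt_17 (L : ℝ) (hL : 0 < L) (m : ℕ) (v : Fin m → ℝ × ℝ → ℝ × ℝ)
    (hC1 : ∀ j, ContDiff ℝ 1 (v j))
    (hper1 : ∀ j (x : ℝ × ℝ), v j (x.1 + L, x.2) = v j x)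
    (hper2 : ∀ j (x : ℝ × ℝ), v j (x.1, x.2 + L) = v j x)
    (hmean : ∀ j, (∫ x in Set.Ioc (0:ℝ) L ×ˢ Set.Ioc (0:ℝ) L, v j x) = 0)
    (hdiv : ∀ j x, pd1 (fun y => (v j y).1) x + pd2 (fun y => (v j y).2) x = 0)
    (hortho : ∀ i j, (∫ x in Set.Ioc (0:ℝ) L ×ˢ Set.Ioc (0:ℝ) L,
        ((v i x).1 * (v j x).1 + (v i x).2 * (v j x).2)) = if i = j then 1 else 0) :
    (∫ x in Set.Ioc (0:ℝ) L ×ˢ Set.Ioc (0:ℝ) L,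
        (∑ j, ((v j x).1 ^ 2 + (v j x).2 ^ 2)) ^ 2) ≤
      (3 / 2) * ∑ j, ∫ x in Set.Ioc (0:ℝ) L ×ˢ Set.Ioc (0:ℝ) L, gradSq (v j) x := by
  have hconst : 12 / π ^ 2 ≤ 3 / 2 := by
    rw [div_le_iff₀ (by positivity)]
    nlinarith [Real.pi_gt_three]
  exact (stmt_17_general hL hC1 hper1 hper2 hmean hdiv hortho).trans <| mul_le_mul_of_nonneg_right
    hconst (Finset.sum_nonneg fun j _ => integral_nonneg (gradSq_nonneg (v j)))
end
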